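/- Let X be a connected tiled surface which is a proper surface, meaning every edge is incident with one or two 4g-gons and every vertex is incident with a single sequence of m 4g-gons with 1 ≤ m ≤ 4g. Suppose X has genus h and a total of b boundary components and punctures. If h ≥ 1 or b ≥ 3, then X^(1) contains a cycle, not contained in ∂X, which is cyclically shortest among the cycles representing its free homotopy class in X. -/

import Mathlib

/-!
Formalization preamble for "Core Surfaces" (Magee–Puder).

We work with a fixed combinatorial (CW) model.  The surface `Σ_g` has one vertex,
`2g` directed labeled edges (the label `2i` plays the role of `a_{i+1}` and `2i+1`
the role of `b_{i+1}`), and one `4g`-gon glued along `[a₁,b₁]⋯[a_g,b_g]`.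

* `Gamma g` is the surface group, presented by the single relator.
* A `Complex g` is a combinatorial 2-complex with directed, labeled edges and
  2-cells given by their boundary walks; coverings of `Σ_g` are the complexes in
  which every vertex has exactly one incoming/outgoing edge of each label, every
  walk reading the relator is closed, and every closed walk reading the relator
  bounds exactly one face (`IsCovering`).  A tiled surface is a complex that
  embeds into such a covering (`IsTiledSurface`).
* Blocks, chains, boundary cycles (via the ribbon structure coming from the fixed
  cyclic order of the `4g` half-edges around a vertex of `Σ_g`), boundary-reduced
  and strongly boundary-reduced surfaces are defined combinatorially.
* Homotopy of edge-walks is the edge-path-group homotopy: backtrack insertions and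
  insertions of boundaries of (present) faces.
* `cover g J` is the covering space `J\~Σ_g` of `Σ_g` associated to a subgroup
  `J ≤ Γ_g` (vertices = right cosets), and `coreSub g J` is the core surface of
  `J`, defined exactly as in the paper: the union of all shortest representative
  cycles of essential free-homotopy classes, together with all components of the
  complement containing finitely many `4g`-gons.
-/

noncomputable section

namespace CS

/-- Signed letters over the generators `a₁,b₁,…,a_g,b_g` of `Γ_g`
(`a_{i+1} ↦ 2i`, `b_{i+1} ↦ 2i+1`); `true` means a positive letter. -/
abbrev Letter (g : ℕ) := Fin (2 * g) × Bool

/-- The label of the `p`-th letter of the relator `[a₁,b₁][a₂,b₂]⋯[a_g,b_g]`. -/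
def relLabel (g : ℕ) (p : Fin (4 * g)) : Fin (2 * g) :=
  ⟨2 * ((p : ℕ) / 4) + ((p : ℕ) % 4) % 2, by have := p.2; omega⟩

/-- The sign of the `p`-th letter of the relator. -/
def relSign (g : ℕ) (p : Fin (4 * g)) : Bool := decide ((p : ℕ) % 4 < 2)

/-- The relator `[a₁,b₁][a₂,b₂]⋯[a_g,b_g]` as a word (list of signed letters). -/
def relatorWord (g : ℕ) : List (Letter g) :=
  (List.finRange (4 * g)).map fun p => (relLabel g p, relSign g p)

/-- The relator as an element of the free group on the `2g` generators. -/
def relatorF (g : ℕ) : FreeGroup (Fin (2 * g)) :=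
  ((relatorWord g).map fun l => if l.2 then FreeGroup.of l.1 else (FreeGroup.of l.1)⁻¹).prod

/-- The surface group `Γ_g = ⟨a₁,b₁,…,a_g,b_g ∣ [a₁,b₁]⋯[a_g,b_g]⟩`. -/
abbrev Gamma (g : ℕ) := PresentedGroup ({relatorF g} : Set (FreeGroup (Fin (2 * g))))

/-- The image of a signed letter in `Γ_g`. -/
def letterG {g : ℕ} (l : Letter g) : Gamma g :=
  if l.2 then PresentedGroup.of l.1 else (PresentedGroup.of l.1)⁻¹

/-- The image of a word in `Γ_g`. -/
def wordG {g : ℕ} (w : List (Letter g)) : Gamma g := (w.map letterG).prod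

/-- `ℓ(γ^{Γ_g})`: the minimal length of a word in the generators representing the
conjugacy class of `γ` in `Γ_g`. -/
def conjLen {g : ℕ} (γ : Gamma g) : ℕ :=
  sInf {n | ∃ w : List (Letter g), w.length = n ∧ ∃ x : Gamma g, x * wordG w * x⁻¹ = γ}

/-! ### Half-edge positions around a vertex of `Σ_g`

The `4g` half-edges around the vertex `o` of `Σ_g` come in the (clockwise) cyclic
order `a₁`-out, `b₁`-in, `a₁`-in, `b₁`-out, `a₂`-out, `b₂`-in, `a₂`-in, `b₂`-out, …
-/

/-- Position of the outgoing `ℓ`-labeled half-edge in the cyclic order. -/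
def posOut {g : ℕ} (ℓ : Fin (2 * g)) : ℕ :=
  if (ℓ : ℕ) % 2 = 0 then 2 * (ℓ : ℕ) else 2 * (ℓ : ℕ) + 1

/-- Position of the incoming `ℓ`-labeled half-edge in the cyclic order. -/
def posIn {g : ℕ} (ℓ : Fin (2 * g)) : ℕ :=
  if (ℓ : ℕ) % 2 = 0 then 2 * (ℓ : ℕ) + 2 else 2 * (ℓ : ℕ) - 1

/-- The position of the half-edge through which a traversal of a dart with signed
letter `s` *arrives* at its terminal vertex. -/
def posArr {g : ℕ} (s : Letter g) : ℕ := if s.2 then posIn s.1 else posOut s.1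

/-- The position of the half-edge through which a traversal of a dart with signed
letter `s` *leaves* its initial vertex. -/
def posLv {g : ℕ} (s : Letter g) : ℕ := if s.2 then posOut s.1 else posIn s.1

/-- The number of half-edges strictly between the arrival half-edge of `s` and the
departure half-edge of `t`, in the clockwise cyclic order of the `4g` half-edges
around a vertex. -/
def gapN {g : ℕ} (s t : Letter g) : ℕ := (posLv t + 4 * g - (posArr s + 1)) % (4 * g)

/-! ### Combinatorial complexes -/

/-- A combinatorial at-most-2-dimensional CW-complex with directed edges labeled by
the generators of `Γ_g`, and 2-cells recorded by their boundary walks (lists of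
darts, i.e. edges with a direction of traversal). -/
structure Complex (g : ℕ) where
  V : Type
  E : Type
  F : Type
  src : E → V
  dst : E → V
  lab : E → Fin (2 * g)
  bdry : F → List (E × Bool)

namespace Complex

variable {g : ℕ} (Y : Complex g)

/-- Darts: edges together with a direction of traversal (`true` = forward). -/
abbrev D := Y.E × Bool

/-- The initial vertex of a dart. -/
def dTail (d : Y.D) : Y.V := if d.2 then Y.src d.1 else Y.dst d.1

/-- The terminal vertex of a dart. -/
def dHead (d : Y.D) : Y.V := if d.2 then Y.dst d.1 else Y.src d.1

/-- The reversal of a dart. -/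
def dRev (d : Y.D) : Y.D := (d.1, !d.2)

/-- The signed letter read by a dart. -/
def dLet (d : Y.D) : Letter g := (Y.lab d.1, d.2)

/-- The word read along a list of darts. -/
def wordOf (l : List Y.D) : List (Letter g) := l.map Y.dLet

/-- The reversed walk. -/
def revW (l : List Y.D) : List Y.D := (l.map Y.dRev).reverse

/-- `WalkFrom u v l` : `l` is a walk (edge-path) from `u` to `v`. -/
inductive WalkFrom : Y.V → Y.V → List Y.D → Prop
  | nil (v : Y.V) : WalkFrom v v []
  | cons (d : Y.D) {v : Y.V} {l : List Y.D} :
      WalkFrom (Y.dHead d) v l → WalkFrom (Y.dTail d) v (d :: l)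

/-- All darts of `l` use edges from the set `sE`. -/
def InSet (sE : Set Y.E) (l : List Y.D) : Prop := ∀ d ∈ l, d.1 ∈ sE

/-- Two darts are adjacent (can be traversed consecutively). -/
def adj (d d' : Y.D) : Prop := Y.dHead d = Y.dTail d'

/-- A nonempty closed walk. -/
def IsCycle (c : List Y.D) : Prop := c ≠ [] ∧ ∃ v, Y.WalkFrom v v c

/-- **P1**: at most one incoming and at most one outgoing `ℓ`-labeled edge at every
vertex, for every label `ℓ`. -/
def P1 : Prop :=
  (∀ e e' : Y.E, Y.src e = Y.src e' → Y.lab e = Y.lab e' → e = e') ∧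
  (∀ e e' : Y.E, Y.dst e = Y.dst e' → Y.lab e = Y.lab e' → e = e')

/-- **P2**: every walk reading a word equal to `1` in `Γ_g` is closed. -/
def P2 : Prop :=
  ∀ (u v : Y.V) (l : List Y.D), Y.WalkFrom u v l → wordG (Y.wordOf l) = 1 → u = v

/-- **P3**: every 2-cell is glued along a closed walk reading the relator
`[a₁,b₁]⋯[a_g,b_g]`, and every such closed walk bounds at most one 2-cell. -/
def P3 : Prop :=
  (∀ f : Y.F, (∃ v, Y.WalkFrom v v (Y.bdry f)) ∧ Y.wordOf (Y.bdry f) = relatorWord g) ∧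
  Function.Injective Y.bdry

/-- A combinatorial covering space of `Σ_g`: every vertex has exactly one outgoing
and one incoming edge of each label, every walk reading the relator is closed, and
every closed walk reading the relator bounds exactly one `4g`-gon. -/
def IsCovering : Prop :=
  Y.P1 ∧ Y.P3 ∧
  (∀ (v : Y.V) (ℓ : Fin (2 * g)), ∃ e, Y.src e = v ∧ Y.lab e = ℓ) ∧
  (∀ (v : Y.V) (ℓ : Fin (2 * g)), ∃ e, Y.dst e = v ∧ Y.lab e = ℓ) ∧
  (∀ (u v : Y.V) (l : List Y.D), Y.WalkFrom u v l → Y.wordOf l = relatorWord g → u = v) ∧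
  (∀ (v : Y.V) (l : List Y.D), Y.WalkFrom v v l → Y.wordOf l = relatorWord g →
    ∃ f, Y.bdry f = l)

end Complex

/-- A morphism of labeled complexes: maps cells to cells of the same dimension and
respects sources, targets, labels and face boundaries (equivalently, commutes with
the immersions to `Σ_g`). -/
structure Hom {g : ℕ} (Y Z : Complex g) where
  mV : Y.V → Z.V
  mE : Y.E → Z.E
  mF : Y.F → Z.F
  hsrc : ∀ e, Z.src (mE e) = mV (Y.src e)
  hdst : ∀ e, Z.dst (mE e) = mV (Y.dst e)
  hlab : ∀ e, Z.lab (mE e) = Y.lab e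
  hbdry : ∀ f, Z.bdry (mF f) = (Y.bdry f).map fun d => (mE d.1, d.2)

namespace Hom

variable {g : ℕ} {Y Z : Complex g}

/-- The induced map on darts. -/
def mD (φ : Hom Y Z) (d : Y.D) : Z.D := (φ.mE d.1, d.2)

/-- Injectivity (an embedding of complexes). -/
def Inj (φ : Hom Y Z) : Prop :=
  Function.Injective φ.mV ∧ Function.Injective φ.mE ∧ Function.Injective φ.mF

end Hom

namespace Complex

variable {g : ℕ} (Y : Complex g)

/-- A tiled surface: a complex which embeds into a combinatorial covering space of
`Σ_g` (compatibly with directions and labels). -/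
def IsTiledSurface : Prop :=
  ∃ Z : Complex g, Z.IsCovering ∧ ∃ φ : Hom Y Z, φ.Inj

/-- Connectivity of a complex (any two vertices are joined by a walk). -/
def Connected : Prop := Nonempty Y.V ∧ ∀ v w : Y.V, ∃ l, Y.WalkFrom v w l

/-! ### Blocks and chains -/

/-- A block: a nonempty walk such that successive darts have no half-edges between
them (hence it reads a subword of the cyclic relator, of length at most `4g`). -/
def IsBlock (l : List Y.D) : Prop :=
  l ≠ [] ∧ l.length ≤ 4 * g ∧
  List.Chain' (fun d d' => Y.adj d d' ∧ gapN (Y.dLet d) (Y.dLet d') = 0) l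

/-- Two blocks are consecutive: concatenation is a walk and there is exactly one
half-edge between the last dart of the first and the first dart of the second. -/
def chainStep (b b' : List Y.D) : Prop :=
  ∃ d d', b.getLast? = some d ∧ b'.head? = some d' ∧ Y.adj d d' ∧
    gapN (Y.dLet d) (Y.dLet d') = 1

/-- A chain: a nonempty sequence of consecutive blocks. -/
def IsChain (bs : List (List Y.D)) : Prop :=
  bs ≠ [] ∧ (∀ b ∈ bs, Y.IsBlock b) ∧ List.Chain' Y.chainStep bs

/-- A cyclic chain: a chain whose blocks pave an entire cycle. -/
def IsCyclicChain (bs : List (List Y.D)) : Prop :=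
  Y.IsChain bs ∧ ∃ b b', bs.getLast? = some b ∧ bs.head? = some b' ∧ Y.chainStep b b'

/-- A long chain: a chain of consecutive blocks of lengths `2g, 2g−1, …, 2g−1, 2g`. -/
def IsLongChain (bs : List (List Y.D)) : Prop :=
  Y.IsChain bs ∧ ∃ k, bs.map List.length = 2 * g :: (List.replicate k (2 * g - 1) ++ [2 * g])

/-- A half-chain: a cyclic chain all of whose blocks have length `2g − 1`. -/
def IsHalfChain (bs : List (List Y.D)) : Prop :=
  Y.IsCyclicChain bs ∧ ∀ b ∈ bs, b.length = 2 * g - 1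

/-! ### Boundary cycles of the thick version (relative to sets of present edges and
faces), via the ribbon structure -/

/-- `nextD sE d d'`: among darts (with edge in `sE`) leaving the head of `d`, the
dart `d'` is the first one in clockwise order after the arrival half-edge of `d`.
This is the successor map whose orbits trace the boundary components of the thick
version of the ribbon graph. -/
def nextD (sE : Set Y.E) (d d' : Y.D) : Prop :=
  d'.1 ∈ sE ∧ Y.adj d d' ∧
  ∀ d'' : Y.D, d''.1 ∈ sE → Y.adj d d'' →
    gapN (Y.dLet d) (Y.dLet d') ≤ gapN (Y.dLet d) (Y.dLet d'')

/-- The corner between the consecutive darts `d, d'` is filled by a face from `sF`. -/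
def faceStep (sF : Set Y.F) (d d' : Y.D) : Prop :=
  ∃ f ∈ sF, [d, d'] <:+: (Y.bdry f ++ Y.bdry f)

/-- One step along the boundary of the thick version. -/
def bStep (sE : Set Y.E) (sF : Set Y.F) (d d' : Y.D) : Prop :=
  d.1 ∈ sE ∧ Y.nextD sE d d' ∧ ¬ Y.faceStep sF d d'

/-- A (finite segment of a) boundary cycle of the thick version. -/
def BPath (sE : Set Y.E) (sF : Set Y.F) (l : List Y.D) : Prop :=
  l ≠ [] ∧ Y.InSet sE l ∧ List.Chain' (Y.bStep sE sF) l

/-- A (finite) boundary cycle of the thick version. -/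
def BCycle (sE : Set Y.E) (sF : Set Y.F) (l : List Y.D) : Prop :=
  Y.BPath sE sF l ∧ ∃ d d', l.getLast? = some d ∧ l.head? = some d' ∧ Y.bStep sE sF d d'

/-- A dart lying on the boundary of the thick version. -/
def IsBDart (sE : Set Y.E) (sF : Set Y.F) (d : Y.D) : Prop :=
  d.1 ∈ sE ∧ ∃ d', Y.nextD sE d d' ∧ ¬ Y.faceStep sF d d'

/-- Boundary reduced: no boundary cycle contains a long block (length `≥ 2g+1`) or
a long chain. -/
def BoundaryReduced (sE : Set Y.E) (sF : Set Y.F) : Prop :=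
  (∀ l, Y.BPath sE sF l → ¬ (Y.IsBlock l ∧ 2 * g + 1 ≤ l.length)) ∧
  (∀ bs, Y.IsLongChain bs → ¬ Y.BPath sE sF bs.flatten)

/-- Strongly boundary reduced: no boundary cycle contains a half-block (length
exactly `2g`) or a half-chain. -/
def StronglyBoundaryReduced (sE : Set Y.E) (sF : Set Y.F) : Prop :=
  (∀ l, Y.BPath sE sF l → ¬ (Y.IsBlock l ∧ l.length = 2 * g)) ∧
  (∀ bs, Y.IsHalfChain bs → ¬ Y.BCycle sE sF bs.flatten)

/-! ### Combinatorial homotopy of walks -/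

/-- A closed walk traversing the boundary of a face from `sF` (in either direction,
starting anywhere). -/
def faceLoop (sF : Set Y.F) (b : List Y.D) : Prop :=
  ∃ f ∈ sF, ∃ n, b = (Y.bdry f).rotate n ∨ b = Y.revW ((Y.bdry f).rotate n)

/-- Elementary homotopy move: insertion of a backtrack or of a face boundary. -/
def elemMove (sE : Set Y.E) (sF : Set Y.F) (l l' : List Y.D) : Prop :=
  (∃ (l₁ l₂ : List Y.D) (d : Y.D), d.1 ∈ sE ∧ l = l₁ ++ l₂ ∧ l' = l₁ ++ d :: Y.dRev d :: l₂) ∨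
  (∃ l₁ l₂ b, Y.faceLoop sF b ∧ l = l₁ ++ l₂ ∧ l' = l₁ ++ b ++ l₂)

/-- Homotopy (rel endpoints) of walks from `u` to `v`, inside the subcomplex with
edge set `sE` and face set `sF`. -/
def Homotopic (sE : Set Y.E) (sF : Set Y.F) (u v : Y.V) (c c' : List Y.D) : Prop :=
  Relation.EqvGen
    (fun a b =>
      Y.WalkFrom u v a ∧ Y.WalkFrom u v b ∧ Y.InSet sE a ∧ Y.InSet sE b ∧
        (Y.elemMove sE sF a b ∨ Y.elemMove sE sF b a)) c c'

/-- A closed walk which is null-homotopic. -/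
def NullHomotopic (sE : Set Y.E) (sF : Set Y.F) (c : List Y.D) : Prop :=
  ∃ v, Y.WalkFrom v v c ∧ Y.Homotopic sE sF v v c []

/-- An essential cycle: a nonempty closed walk which is not null-homotopic. -/
def Essential (sE : Set Y.E) (sF : Set Y.F) (c : List Y.D) : Prop :=
  Y.IsCycle c ∧ Y.InSet sE c ∧ ¬ Y.NullHomotopic sE sF c

/-- Free homotopy of closed walks. -/
def FreelyHomotopic (sE : Set Y.E) (sF : Set Y.F) (c c' : List Y.D) : Prop :=
  ∃ u v q, Y.WalkFrom u u c ∧ Y.WalkFrom v v c' ∧ Y.WalkFrom u v q ∧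
    Y.InSet sE q ∧ Y.InSet sE c ∧ Y.InSet sE c' ∧
    Y.Homotopic sE sF u u c (q ++ c' ++ Y.revW q)

/-- `c` is a shortest representative of its free homotopy class. -/
def ShortestRep (sE : Set Y.E) (sF : Set Y.F) (c : List Y.D) : Prop :=
  ∀ c', Y.FreelyHomotopic sE sF c c' → c.length ≤ c'.length

end Complex

/-- `s` occurs as a contiguous subword of the cyclic word `c`. -/
def cycContains {α : Type*} (c s : List α) : Prop :=
  s ≠ [] ∧ s.length ≤ c.length ∧ s <:+: (c ++ c)

namespace Complex

variable {g : ℕ} (Y : Complex g)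

/-- The cycle `c` contains no long block and no long chain. -/
def NoLongBlockOrChainCyc (c : List Y.D) : Prop :=
  (∀ s, cycContains c s → ¬ (Y.IsBlock s ∧ 2 * g + 1 ≤ s.length)) ∧
  (∀ bs, Y.IsLongChain bs → ¬ cycContains c bs.flatten)

/-- A (cyclically) non-backtracking cycle. -/
def NonBacktrackingCyc (c : List Y.D) : Prop :=
  ¬ ∃ d : Y.D, cycContains c [d, Y.dRev d]

/-- A cycle which is essential and a shortest representative of its
free homotopy class. -/
def GoodCycle (c : List Y.D) : Prop :=
  Y.IsCycle c ∧ Y.Essential Set.univ Set.univ c ∧ Y.ShortestRep Set.univ Set.univ c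

/-! ### Cells and components of complements -/

/-- The cells of a complex. -/
def Cell := Y.V ⊕ Y.E ⊕ Y.F

def vCell (v : Y.V) : Y.Cell := Sum.inl v
def eCell (e : Y.E) : Y.Cell := Sum.inr (Sum.inl e)
def fCell (f : Y.F) : Y.Cell := Sum.inr (Sum.inr f)

/-- Basic incidence of (open) cells. -/
def inc0 : Y.Cell → Y.Cell → Prop := fun c c' =>
  match c, c' with
  | Sum.inl v, Sum.inr (Sum.inl e) => Y.src e = v ∨ Y.dst e = v
  | Sum.inl v, Sum.inr (Sum.inr f) => ∃ d ∈ Y.bdry f, Y.dTail d = v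
  | Sum.inr (Sum.inl e), Sum.inr (Sum.inr f) => ∃ b, (e, b) ∈ Y.bdry f
  | _, _ => False

/-- Symmetrized incidence of cells. -/
def incid (c c' : Y.Cell) : Prop := Y.inc0 c c' ∨ Y.inc0 c' c

end Complex

/-- A triple of subsets of the cells of a complex `Y` (a prospective subcomplex). -/
structure SubC {g : ℕ} (Y : Complex g) where
  sV : Set Y.V
  sE : Set Y.E
  sF : Set Y.F

namespace SubC

variable {g : ℕ} {Y : Complex g}

/-- `S` is an actual subcomplex: closed under taking boundaries of cells. -/
def IsSub (S : SubC Y) : Prop :=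
  (∀ e ∈ S.sE, Y.src e ∈ S.sV ∧ Y.dst e ∈ S.sV) ∧
  (∀ f ∈ S.sF, ∀ d ∈ Y.bdry f, d.1 ∈ S.sE)

/-- Containment of subcomplexes. -/
def le (S T : SubC Y) : Prop := S.sV ⊆ T.sV ∧ S.sE ⊆ T.sE ∧ S.sF ⊆ T.sF

/-- Compactness: finitely many cells. -/
def Compact (S : SubC Y) : Prop := S.sV.Finite ∧ S.sE.Finite ∧ S.sF.Finite

/-- Connectivity of the subcomplex. -/
def Connected (S : SubC Y) : Prop :=
  S.sV.Nonempty ∧ ∀ v ∈ S.sV, ∀ w ∈ S.sV, ∃ l, Y.WalkFrom v w l ∧ Y.InSet S.sE l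

/-- Image of a subcomplex under a morphism. -/
def image {Z : Complex g} (φ : Hom Y Z) (S : SubC Y) : SubC Z :=
  ⟨φ.mV '' S.sV, φ.mE '' S.sE, φ.mF '' S.sF⟩

end SubC

/-- The whole complex, as a subcomplex of itself. -/
def fullSub {g : ℕ} (Y : Complex g) : SubC Y := ⟨Set.univ, Set.univ, Set.univ⟩

namespace Complex

variable {g : ℕ} (Y : Complex g)

/-- Membership of a cell in a subcomplex. -/
def inSub (S : SubC Y) : Y.Cell → Prop := fun c =>
  match c with
  | Sum.inl v => v ∈ S.sV
  | Sum.inr (Sum.inl e) => e ∈ S.sE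
  | Sum.inr (Sum.inr f) => f ∈ S.sF

/-- Reachability of cells through the open complement of the subcomplex `S`
(= lying in the same connected component of the complement). -/
def reachS (S : SubC Y) (c c' : Y.Cell) : Prop :=
  Relation.ReflTransGen (fun a b => Y.incid a b ∧ ¬ Y.inSub S a ∧ ¬ Y.inSub S b) c c'

end Complex

/-- The closure (as a subcomplex) of the connected component of the cell `c₀` in the
complement of the subcomplex `S`. -/
def compCl {g : ℕ} (Y : Complex g) (S : SubC Y) (c₀ : Y.Cell) : SubC Y :=
  let cF : Set Y.F := {f | Y.reachS S c₀ (Y.fCell f)}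
  let cE : Set Y.E :=
    {e | Y.reachS S c₀ (Y.eCell e)} ∪ {e | ∃ f ∈ cF, ∃ b, (e, b) ∈ Y.bdry f}
  let cV : Set Y.V :=
    {v | Y.reachS S c₀ (Y.vCell v)} ∪ {v | ∃ e ∈ cE, Y.src e = v ∨ Y.dst e = v}
  ⟨cV, cE, cF⟩

/-- The subcomplex has exactly one boundary cycle (which covers all boundary darts). -/
def OneBdry {g : ℕ} (Y : Complex g) (S : SubC Y) : Prop :=
  ∃ δ, Y.BCycle S.sE S.sF δ ∧ ∀ d, Y.IsBDart S.sE S.sF d → d ∈ δ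

/-- The subcomplex has exactly two (disjoint) boundary cycles, covering all
boundary darts. -/
def TwoBdry {g : ℕ} (Y : Complex g) (S : SubC Y) : Prop :=
  ∃ δ₁ δ₂, Y.BCycle S.sE S.sF δ₁ ∧ Y.BCycle S.sE S.sF δ₂ ∧ δ₁.Disjoint δ₂ ∧
    ∀ d, Y.IsBDart S.sE S.sF d → d ∈ δ₁ ∨ d ∈ δ₂

/-- The boundary-reduced closure of `S` inside `Y`: the intersection of all
intermediate boundary reduced subcomplexes. -/
def BRcl {g : ℕ} (Y : Complex g) (S : SubC Y) : SubC Y where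
  sV := ⋂ T ∈ {T : SubC Y | T.IsSub ∧ S.le T ∧ Y.BoundaryReduced T.sE T.sF}, T.sV
  sE := ⋂ T ∈ {T : SubC Y | T.IsSub ∧ S.le T ∧ Y.BoundaryReduced T.sE T.sF}, T.sE
  sF := ⋂ T ∈ {T : SubC Y | T.IsSub ∧ S.le T ∧ Y.BoundaryReduced T.sE T.sF}, T.sF

/-- The strongly-boundary-reduced closure of `S` inside `Y`. -/
def SBRcl {g : ℕ} (Y : Complex g) (S : SubC Y) : SubC Y where
  sV := ⋂ T ∈ {T : SubC Y | T.IsSub ∧ S.le T ∧ Y.StronglyBoundaryReduced T.sE T.sF}, T.sV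
  sE := ⋂ T ∈ {T : SubC Y | T.IsSub ∧ S.le T ∧ Y.StronglyBoundaryReduced T.sE T.sF}, T.sE
  sF := ⋂ T ∈ {T : SubC Y | T.IsSub ∧ S.le T ∧ Y.StronglyBoundaryReduced T.sE T.sF}, T.sF

/-- An isomorphism between the subcomplex `S` of `Y` and the subcomplex `T` of `Z`. -/
structure SubEquiv {g : ℕ} (Y : Complex g) (S : SubC Y) (Z : Complex g) (T : SubC Z) where
  fV : Y.V → Z.V
  fE : Y.E → Z.E
  fF : Y.F → Z.F
  bijV : Set.BijOn fV S.sV T.sV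
  bijE : Set.BijOn fE S.sE T.sE
  bijF : Set.BijOn fF S.sF T.sF
  hsrc : ∀ e ∈ S.sE, Z.src (fE e) = fV (Y.src e)
  hdst : ∀ e ∈ S.sE, Z.dst (fE e) = fV (Y.dst e)
  hlab : ∀ e ∈ S.sE, Z.lab (fE e) = Y.lab e
  hbdry : ∀ f ∈ S.sF, Z.bdry (fF f) = (Y.bdry f).map fun d => (fE d.1, d.2)

/-- `FunnelComponent Y S c₀`: the connected component of the cell `c₀` in the
complement of the subcomplex `S` is a twice-punctured sphere with one funnel and
one fake-puncture.  Rendered combinatorially: the component contains infinitely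
many `4g`-gons (the funnel); there is a boundary cycle `δ` of `S` adjacent to the
component, it is unique (one fake-puncture), and every closed walk inside the
closure of the component is freely homotopic there to a power of `δ` or of its
inverse (so the closure is a half-open annulus bounded by `δ`). -/
def FunnelComponent {g : ℕ} (Y : Complex g) (S : SubC Y) (c₀ : Y.Cell) : Prop :=
  {f : Y.F | Y.reachS S c₀ (Y.fCell f)}.Infinite ∧
  ∃ δ : List Y.D, Y.BCycle S.sE S.sF δ ∧
    (∃ d ∈ δ, ∃ c', Y.incid (Y.eCell d.1) c' ∧ Y.reachS S c₀ c') ∧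
    (∀ δ', Y.BCycle S.sE S.sF δ' →
      (∃ d ∈ δ', ∃ c', Y.incid (Y.eCell d.1) c' ∧ Y.reachS S c₀ c') →
      ∃ n, δ' = δ.rotate n) ∧
    (∀ (v : Y.V) (l : List Y.D), Y.WalkFrom v v l →
      Y.InSet ({e | Y.reachS S c₀ (Y.eCell e)} ∪ {e | ∃ b, (e, b) ∈ δ}) l →
      ∃ n,
        Y.FreelyHomotopic ({e | Y.reachS S c₀ (Y.eCell e)} ∪ {e | ∃ b, (e, b) ∈ δ})
          {f | Y.reachS S c₀ (Y.fCell f)} l ((List.replicate n δ).flatten) ∨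
        Y.FreelyHomotopic ({e | Y.reachS S c₀ (Y.eCell e)} ∪ {e | ∃ b, (e, b) ∈ δ})
          {f | Y.reachS S c₀ (Y.fCell f)} l ((List.replicate n (Y.revW δ)).flatten))

/-- `Y` contains a funnel: an essential cycle `δ` of `Y` cutting off an infinite
region of `Y` which is attached to the rest of `Y` only along `δ`, contains no
boundary of `Y`, and is a half-open annulus (every loop inside is freely homotopic
to a power of `δ`); i.e. an end of `Y` which is a puncture of the ambient covering. -/
def HasFunnel {g : ℕ} (Y : Complex g) : Prop :=
  ∃ (δ : List Y.D) (sE : Set Y.E) (sF : Set Y.F),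
    Y.IsCycle δ ∧ Y.Essential Set.univ Set.univ δ ∧
    (∀ d ∈ δ, d.1 ∉ sE) ∧ sE.Nonempty ∧ sF.Infinite ∧
    (∀ f ∈ sF, ∀ d ∈ Y.bdry f, d.1 ∈ sE ∨ ∃ b, (d.1, b) ∈ δ) ∧
    (∀ f : Y.F, (∃ d ∈ Y.bdry f, d.1 ∈ sE) → f ∈ sF) ∧
    (∀ d : Y.D, d.1 ∈ sE → ¬ Y.IsBDart Set.univ Set.univ d) ∧
    (∀ v : Y.V, (∃ e ∈ sE, Y.src e = v ∨ Y.dst e = v) → (∀ d ∈ δ, Y.dTail d ≠ v) →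
      ∀ e' : Y.E, (Y.src e' = v ∨ Y.dst e' = v) → e' ∈ sE) ∧
    (∀ (v : Y.V) (l : List Y.D), Y.WalkFrom v v l →
      Y.InSet (sE ∪ {e | ∃ b, (e, b) ∈ δ}) l →
      ∃ n,
        Y.FreelyHomotopic (sE ∪ {e | ∃ b, (e, b) ∈ δ}) sF l
          ((List.replicate n δ).flatten) ∨
        Y.FreelyHomotopic (sE ∪ {e | ∃ b, (e, b) ∈ δ}) sF l
          ((List.replicate n (Y.revW δ)).flatten))

/-- The fundamental group of `Y` is cyclic: some closed walk `c` generates all free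
homotopy classes of loops.  (For a connected surface this is *equivalent to NOT
having genus ≥ 1 or at least 3 boundary components/punctures*.) -/
def CyclicPi1 {g : ℕ} (Y : Complex g) : Prop :=
  ∃ c : List Y.D, ∀ (v : Y.V) (l : List Y.D), Y.WalkFrom v v l →
    ∃ n,
      Y.FreelyHomotopic Set.univ Set.univ l ((List.replicate n c).flatten) ∨
      Y.FreelyHomotopic Set.univ Set.univ l ((List.replicate n (Y.revW c)).flatten)

/-! ### The covering space `J\~Σ_g` and the core surface of `J` -/

/-- Right cosets `Jx` of `J` in `Γ_g` — the vertices (and faces) of `J\~Σ_g`. -/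
abbrev Cos (g : ℕ) (J : Subgroup (Gamma g)) := Quotient (QuotientGroup.rightRel J)

/-- The coset `Jx`. -/
def mkCos (g : ℕ) (J : Subgroup (Gamma g)) (x : Gamma g) : Cos g J :=
  Quotient.mk _ x

/-- Right multiplication on right cosets. -/
def rmul (g : ℕ) (J : Subgroup (Gamma g)) (x : Gamma g) : Cos g J → Cos g J :=
  Quotient.map (· * x) (by
    intro a b hab
    have h1 : b * a⁻¹ ∈ J := QuotientGroup.rightRel_apply.mp hab
    refine QuotientGroup.rightRel_apply.mpr ?_
    have h2 : b * x * (a * x)⁻¹ = b * a⁻¹ := by group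
    rw [h2]; exact h1)

/-- The walk in `J\~Σ_g` starting at a vertex and reading a given word. -/
def relWalk (g : ℕ) (J : Subgroup (Gamma g)) :
    Cos g J → List (Letter g) → List ((Cos g J × Fin (2 * g)) × Bool)
  | _, [] => []
  | v, (ℓ, true) :: w =>
      ((v, ℓ), true) :: relWalk g J (rmul g J (PresentedGroup.of ℓ) v) w
  | v, (ℓ, false) :: w =>
      ((rmul g J (PresentedGroup.of ℓ)⁻¹ v, ℓ), false) ::
        relWalk g J (rmul g J (PresentedGroup.of ℓ)⁻¹ v) w

/-- The covering space `Υ = J\~Σ_g` of `Σ_g` corresponding to the subgroup `J`,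
with the CW-structure pulled back from `Σ_g`: vertices and `4g`-gons are the right
cosets of `J`, and each vertex carries one outgoing edge per label. -/
def cover (g : ℕ) (J : Subgroup (Gamma g)) : Complex g where
  V := Cos g J
  E := Cos g J × Fin (2 * g)
  F := Cos g J
  src e := e.1
  dst e := rmul g J (PresentedGroup.of e.2) e.1
  lab e := e.2
  bdry v := relWalk g J v (relatorWord g)

/-- The map `J₁\~Σ_g → J₂\~Σ_g` on vertices, for `J₁ ≤ J₂`. -/
def coverMapV {g : ℕ} {J₁ J₂ : Subgroup (Gamma g)} (h : J₁ ≤ J₂) :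
    Cos g J₁ → Cos g J₂ :=
  Quotient.map id (by
    intro a b hab
    have h1 : b * a⁻¹ ∈ J₁ := QuotientGroup.rightRel_apply.mp hab
    exact QuotientGroup.rightRel_apply.mpr (h h1))

/-- The natural covering morphism on edges. -/
def coverMapE {g : ℕ} {J₁ J₂ : Subgroup (Gamma g)} (h : J₁ ≤ J₂)
    (e : (cover g J₁).E) : (cover g J₂).E :=
  (coverMapV h e.1, e.2)

/-- The natural covering morphism on darts. -/
def coverMapD {g : ℕ} {J₁ J₂ : Subgroup (Gamma g)} (h : J₁ ≤ J₂)
    (d : (cover g J₁).D) : (cover g J₂).D :=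
  (coverMapE h d.1, d.2)

/-- The cycle `c` in `J\~Σ_g` represents the conjugacy class of `γ` in `J`
(conjugacy classes in `J` ↔ free homotopy classes of essential loops in `J\~Σ_g`). -/
def RepCls {g : ℕ} (J : Subgroup (Gamma g)) (c : List ((cover g J).D))
    (γ : Gamma g) : Prop :=
  ∃ x j : Gamma g, j ∈ J ∧
    (cover g J).WalkFrom (mkCos g J x) (mkCos g J x) c ∧
    x * wordG ((cover g J).wordOf c) * x⁻¹ = j * γ * j⁻¹

/-- Step (i) of the definition of the core surface: the edges lying on some
shortest representative cycle of an essential free homotopy class. -/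
def coreE1 (g : ℕ) (J : Subgroup (Gamma g)) : Set (cover g J).E :=
  {e | ∃ c, (cover g J).GoodCycle c ∧ ∃ b, (e, b) ∈ c}

/-- The vertices of step (i) of the definition of the core surface. -/
def coreV1 (g : ℕ) (J : Subgroup (Gamma g)) : Set (cover g J).V :=
  {v | ∃ e ∈ coreE1 g J, (cover g J).src e = v ∨ (cover g J).dst e = v}

/-- Step (i) of the definition of the core surface, as a subcomplex of `J\~Σ_g`. -/
def coreS1 (g : ℕ) (J : Subgroup (Gamma g)) : SubC (cover g J) :=
  ⟨coreV1 g J, coreE1 g J, ∅⟩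

/-- A cell of `J\~Σ_g` lying in a connected component of the complement of step (i)
which contains only finitely many `4g`-gons. -/
def coreFin (g : ℕ) (J : Subgroup (Gamma g)) (c : (cover g J).Cell) : Prop :=
  ¬ (cover g J).inSub (coreS1 g J) c ∧
  {f : (cover g J).F | (cover g J).reachS (coreS1 g J) c ((cover g J).fCell f)}.Finite

open Classical in
/-- The core surface `Core(J)` of a subgroup `J ≤ Γ_g`, as a subcomplex of
`Υ = J\~Σ_g`: (i) the union of all shortest representative cycles of essential
free homotopy classes in `Υ`, together with (ii) all connected components of the
complement containing finitely many `4g`-gons.  For the trivial subgroup it is a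
single vertex. -/
def coreSub (g : ℕ) (J : Subgroup (Gamma g)) : SubC (cover g J) :=
  if J = ⊥ then ⟨{mkCos g J 1}, ∅, ∅⟩
  else
    ⟨coreV1 g J ∪ {v | coreFin g J ((cover g J).vCell v)},
     coreE1 g J ∪ {e | coreFin g J ((cover g J).eCell e)},
     {f | coreFin g J ((cover g J).fCell f)}⟩

/-!
Suppose that no shortest cycle runs through an edge with faces on both sides. The cyclically
shortest representatives of a nontrivial loop then consist of boundary edges only, and since at
each vertex at most one boundary edge arrives and one leaves, they are powers of boundary circles:
every element of the fundamental group is conjugate to a power of some circle `xᵢ`. For two circles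
`xᵢ` and `xⱼ`, crossing numbers with a dual path that joins them define a homomorphism to `ℤ` with
`xᵢ ↦ 1`, `xⱼ ↦ -1` and `xₖ ↦ 0` otherwise. If there were three circles, these homomorphisms would
show that `xᵢ * xⱼ ^ 2` is not conjugate to a power of a circle; if there are two, they show that
`xᵢ * xⱼ` is trivial. In every case the fundamental group is cyclic.
-/

open CategoryTheory

/-! ### Walks and the fundamental groupoid -/

namespace Complex

variable {g : ℕ} {X : Complex g}

@[simp] theorem dRev_dRev (d : X.D) : X.dRev (X.dRev d) = d := by
  simp [dRev]

@[simp] theorem dTail_dRev (d : X.D) : X.dTail (X.dRev d) = X.dHead d := by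
  rcases d with ⟨e, _ | _⟩ <;> simp [dRev, dTail, dHead]

@[simp] theorem dHead_dRev (d : X.D) : X.dHead (X.dRev d) = X.dTail d := by
  rcases d with ⟨e, _ | _⟩ <;> simp [dRev, dTail, dHead]

theorem eq_or_eq_dRev_of_fst_eq {d d' : X.D} (h : d.1 = d'.1) : d = d' ∨ d = X.dRev d' := by
  rcases d with ⟨e, _ | _⟩ <;> rcases d' with ⟨e', _ | _⟩ <;> simp_all [dRev]

@[simp] theorem revW_nil : X.revW [] = [] := rfl

@[simp] theorem revW_cons (d : X.D) (l : List X.D) : X.revW (d :: l) = X.revW l ++ [X.dRev d] := by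
  simp [revW]

theorem revW_append (l l' : List X.D) : X.revW (l ++ l') = X.revW l' ++ X.revW l := by
  simp [revW]

@[simp] theorem revW_revW (l : List X.D) : X.revW (X.revW l) = l := by
  induction l with
  | nil => rfl
  | cons d l ih => simp [revW_append, ih]

theorem walkFrom_nil_iff {u v : X.V} : X.WalkFrom u v [] ↔ u = v :=
  ⟨fun h => by cases h; rfl, fun h => h ▸ .nil _⟩

theorem walkFrom_cons_iff {u v : X.V} {d : X.D} {l : List X.D} :
    X.WalkFrom u v (d :: l) ↔ X.dTail d = u ∧ X.WalkFrom (X.dHead d) v l :=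
  ⟨fun h => by cases h with | cons _ h => exact ⟨rfl, h⟩, by rintro ⟨rfl, h⟩; exact .cons _ h⟩

theorem walkFrom_append_iff {u w : X.V} {l l' : List X.D} :
    X.WalkFrom u w (l ++ l') ↔ ∃ v, X.WalkFrom u v l ∧ X.WalkFrom v w l' := by
  induction l generalizing u with
  | nil => simp [walkFrom_nil_iff]
  | cons d l ih => simp [walkFrom_cons_iff, ih, and_assoc]

theorem WalkFrom.end_unique {u v w : X.V} {l : List X.D} (h : X.WalkFrom u v l)
    (h' : X.WalkFrom u w l) : v = w := by
  induction h with
  | nil v => exact walkFrom_nil_iff.1 h'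
  | cons d _ ih => exact ih (walkFrom_cons_iff.1 h').2

theorem WalkFrom.append {u v w : X.V} {l l' : List X.D} (h : X.WalkFrom u v l)
    (h' : X.WalkFrom v w l') : X.WalkFrom u w (l ++ l') :=
  walkFrom_append_iff.2 ⟨v, h, h'⟩

theorem WalkFrom.dHead_eq_dTail {u v : X.V} {d d' : X.D} {l l' : List X.D}
    (h : X.WalkFrom u v (l ++ d :: d' :: l')) : X.dHead d = X.dTail d' := by
  obtain ⟨w, -, h⟩ := walkFrom_append_iff.1 h
  exact (walkFrom_cons_iff.1 (walkFrom_cons_iff.1 h).2).1.symm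

theorem WalkFrom.singleton (d : X.D) : X.WalkFrom (X.dTail d) (X.dHead d) [d] :=
  .cons d (.nil _)

theorem WalkFrom.reverse {u v : X.V} {l : List X.D} (h : X.WalkFrom u v l) :
    X.WalkFrom v u (X.revW l) := by
  induction h with
  | nil v => exact .nil v
  | cons d _ ih =>
    rw [revW_cons]
    exact ih.append (by simpa using WalkFrom.singleton (X.dRev d))

theorem WalkFrom.flatten_replicate {v : X.V} {l : List X.D} (h : X.WalkFrom v v l) (n : ℕ) :
    X.WalkFrom v v (List.replicate n l).flatten := by
  induction n with
  | zero => exact .nil v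
  | succ n ih => simpa [List.replicate_succ] using h.append ih

end Complex

/-- Loops at possibly different points of a groupoid that are conjugate along some path: free
homotopy, when the groupoid is a fundamental groupoid. -/
def FreelyConj {C : Type*} [Groupoid C] {u v : C} (a : u ⟶ u) (b : v ⟶ v) : Prop :=
  ∃ q : u ⟶ v, a ≫ q = q ≫ b

namespace FreelyConj

variable {C : Type*} [Groupoid C] {u v w : C} {a : u ⟶ u} {b : v ⟶ v} {c : w ⟶ w}

theorem refl (a : u ⟶ u) : FreelyConj a a :=
  ⟨𝟙 u, by simp⟩

theorem symm (h : FreelyConj a b) : FreelyConj b a := by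
  obtain ⟨q, hq⟩ := h
  exact ⟨inv q, by rw [IsIso.comp_inv_eq, Category.assoc, hq, IsIso.inv_hom_id_assoc]⟩

theorem trans (h : FreelyConj a b) (h' : FreelyConj b c) : FreelyConj a c := by
  obtain ⟨q, hq⟩ := h
  obtain ⟨r, hr⟩ := h'
  exact ⟨q ≫ r, by rw [← Category.assoc, hq, Category.assoc, hr, Category.assoc]⟩

theorem iff_exists_vertexGroupIsomOfMap :
    FreelyConj a b ↔ ∃ q : u ⟶ v, Groupoid.vertexGroupIsomOfMap q a = b := by
  simp [FreelyConj, IsIso.inv_comp_eq]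

theorem zpow (h : FreelyConj a b) (n : ℤ) : FreelyConj (a ^ n) (b ^ n) := by
  obtain ⟨q, rfl⟩ := iff_exists_vertexGroupIsomOfMap.1 h
  exact iff_exists_vertexGroupIsomOfMap.2 ⟨q, map_zpow _ _ _⟩

theorem iff_isConj {a b : u ⟶ u} : FreelyConj a b ↔ IsConj a b := by
  rw [isConj_comm, isConj_iff]
  exact exists_congr fun q => eq_comm.trans (mul_inv_eq_iff_eq_mul (G := u ⟶ u)).symm

end FreelyConj

namespace Complex

variable {g : ℕ} {X : Complex g}

theorem inSet_univ (l : List X.D) : X.InSet Set.univ l := fun _ _ => trivial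

theorem elemMove_append {l l' : List X.D} (p q : List X.D)
    (h : X.elemMove Set.univ Set.univ l l') :
    X.elemMove Set.univ Set.univ (p ++ l ++ q) (p ++ l' ++ q) := by
  rcases h with ⟨l₁, l₂, d, hd, rfl, rfl⟩ | ⟨l₁, l₂, b, hb, rfl, rfl⟩
  · exact .inl ⟨p ++ l₁, l₂ ++ q, d, hd, by simp, by simp⟩
  · exact .inr ⟨p ++ l₁, l₂ ++ q, b, hb, by simp, by simp⟩

theorem Homotopic.symm {sE : Set X.E} {sF : Set X.F} {u v : X.V} {a b : List X.D}
    (h : X.Homotopic sE sF u v a b) : X.Homotopic sE sF u v b a :=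
  Relation.EqvGen.symm _ _ h

theorem Homotopic.trans {sE : Set X.E} {sF : Set X.F} {u v : X.V} {a b c : List X.D}
    (h : X.Homotopic sE sF u v a b) (h' : X.Homotopic sE sF u v b c) :
    X.Homotopic sE sF u v a c :=
  Relation.EqvGen.trans _ _ _ h h'

theorem Homotopic.append {u v w z : X.V} {a b p q : List X.D}
    (h : X.Homotopic Set.univ Set.univ u v a b) (hp : X.WalkFrom w u p) (hq : X.WalkFrom v z q) :
    X.Homotopic Set.univ Set.univ w z (p ++ a ++ q) (p ++ b ++ q) := by
  induction h with
  | refl => exact .refl _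
  | symm _ _ _ ih => exact ih.symm
  | trans _ _ _ _ _ ih ih' => exact ih.trans ih'
  | rel a b h =>
    obtain ⟨ha, hb, -, -, hab⟩ := h
    exact .rel _ _ ⟨(hp.append ha).append hq, (hp.append hb).append hq, inSet_univ _, inSet_univ _,
      hab.imp (elemMove_append p q) (elemMove_append p q)⟩

theorem WalkFrom.homotopic_append_revW {u v : X.V} {l : List X.D} (h : X.WalkFrom u v l) :
    X.Homotopic Set.univ Set.univ u u (l ++ X.revW l) [] := by
  induction h with
  | nil v => exact .refl _
  | cons d _ ih =>
    have hd := WalkFrom.singleton d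
    have backtrack : X.Homotopic Set.univ Set.univ _ _ ([d] ++ X.revW [d]) [] :=
      .rel _ _ ⟨hd.append hd.reverse, .nil _, inSet_univ _, inSet_univ _,
        .inr (.inl ⟨[], [], d, trivial, rfl, rfl⟩)⟩
    refine .trans ?_ backtrack
    simpa using ih.append hd hd.reverse

variable (X) in
/-- Walks from `u` to `v` up to homotopy: the morphisms of the fundamental groupoid. -/
def walkSetoid (u v : X.V) : Setoid {l // X.WalkFrom u v l} where
  r a b := X.Homotopic Set.univ Set.univ u v a b
  iseqv := ⟨fun _ => .refl _, Homotopic.symm, Homotopic.trans⟩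

/-- The vertices of `X`, with the homotopy classes of walks composed by concatenation. -/
instance : Category X.V where
  Hom u v := Quotient (X.walkSetoid u v)
  id u := ⟦⟨[], .nil u⟩⟧
  comp {u v w} := Quotient.map₂ (fun a b => ⟨a.1 ++ b.1, a.2.append b.2⟩) fun a a' h b b' h' => by
    have left := Homotopic.append h (.nil u) b.2
    have right := Homotopic.append h' a'.2 (.nil w)
    simp only [List.nil_append, List.append_nil] at left right
    exact left.trans right
  id_comp := by rintro u v ⟨l⟩; rfl
  comp_id := by rintro u v ⟨l, h⟩; exact congrArg _ (Subtype.ext (List.append_nil l))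
  assoc := by rintro u v w z ⟨a⟩ ⟨b⟩ ⟨c⟩; exact congrArg _ (Subtype.ext (List.append_assoc _ _ _))

/-- The homotopy class of a walk, as a morphism of the fundamental groupoid. -/
def WalkFrom.cls {u v : X.V} {l : List X.D} (h : X.WalkFrom u v l) : u ⟶ v := ⟦⟨l, h⟩⟧

theorem exists_eq_cls {u v : X.V} (γ : u ⟶ v) :
    ∃ (l : List X.D) (h : X.WalkFrom u v l), h.cls = γ := by
  obtain ⟨l, h⟩ := γ
  exact ⟨l, h, rfl⟩

section cls

variable {u v w : X.V} {l l' : List X.D}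

theorem WalkFrom.cls_eq_iff (h : X.WalkFrom u v l) (h' : X.WalkFrom u v l') :
    h.cls = h'.cls ↔ X.Homotopic Set.univ Set.univ u v l l' :=
  Quotient.eq

theorem WalkFrom.cls_append (h : X.WalkFrom u v l) (h' : X.WalkFrom v w l') :
    (h.append h').cls = h.cls ≫ h'.cls := rfl

theorem WalkFrom.cls_comp_cls_reverse (h : X.WalkFrom u v l) : h.cls ≫ h.reverse.cls = 𝟙 u :=
  (cls_eq_iff _ (.nil u)).2 h.homotopic_append_revW

theorem isIso_hom (γ : u ⟶ v) : IsIso γ := by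
  obtain ⟨l, h, rfl⟩ := exists_eq_cls γ
  have h' := h.reverse.cls_comp_cls_reverse
  simp only [revW_revW] at h'
  exact ⟨h.reverse.cls, h.cls_comp_cls_reverse, h'⟩

/-- The fundamental groupoid of `X`: its objects are the vertices, its morphisms are the walks up
to homotopy. -/
instance : Groupoid X.V := .ofIsIso isIso_hom

theorem WalkFrom.cls_reverse (h : X.WalkFrom u v l) : h.reverse.cls = inv h.cls :=
  (IsIso.inv_eq_of_hom_inv_id h.cls_comp_cls_reverse).symm

theorem WalkFrom.cls_flatten_replicate {v : X.V} {l : List X.D} (h : X.WalkFrom v v l) (n : ℕ) :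
    (h.flatten_replicate n).cls = h.cls ^ n := by
  induction n with
  | zero => rfl
  | succ n ih =>
    rw [pow_succ', ← ih]
    rfl

end cls

theorem freelyHomotopic_iff {c c' : List X.D} :
    X.FreelyHomotopic Set.univ Set.univ c c' ↔
      ∃ (u v : X.V) (h : X.WalkFrom u u c) (h' : X.WalkFrom v v c'), FreelyConj h.cls h'.cls := by
  have key {u v : X.V} {q : List X.D} (h : X.WalkFrom u u c) (h' : X.WalkFrom v v c')
      (hq : X.WalkFrom u v q) : X.Homotopic Set.univ Set.univ u u c (q ++ c' ++ X.revW q) ↔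
        h.cls ≫ hq.cls = hq.cls ≫ h'.cls := by
    rw [← WalkFrom.cls_eq_iff h ((hq.append h').append hq.reverse),
      WalkFrom.cls_append (hq.append h') hq.reverse, WalkFrom.cls_append hq h',
      WalkFrom.cls_reverse, IsIso.eq_comp_inv]
  constructor
  · rintro ⟨u, v, q, h, h', hq, -, -, -, hom⟩
    exact ⟨u, v, h, h', hq.cls, (key h h' hq).1 hom⟩
  · rintro ⟨u, v, h, h', γ, hγ⟩
    obtain ⟨q, hq, rfl⟩ := exists_eq_cls γ
    exact ⟨u, v, q, h, h', hq, inSet_univ _, inSet_univ _, inSet_univ _, (key h h' hq).2 hγ⟩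

theorem cyclicPi1_of_forall_isConj_zpow (hX : X.Connected) {v : X.V} (c : v ⟶ v)
    (hc : ∀ γ : v ⟶ v, ∃ n : ℤ, IsConj γ (c ^ n)) : CyclicPi1 X := by
  obtain ⟨l, h, rfl⟩ := exists_eq_cls c
  refine ⟨l, fun u a ha => ?_⟩
  obtain ⟨q, hq⟩ := hX.2 u v
  obtain ⟨n, hn⟩ := hc (Groupoid.vertexGroupIsomOfMap hq.cls ha.cls)
  have hconj : FreelyConj ha.cls (h.cls ^ n) :=
    .trans (FreelyConj.iff_exists_vertexGroupIsomOfMap.2 ⟨_, rfl⟩) (FreelyConj.iff_isConj.2 hn)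
  obtain ⟨k, rfl | rfl⟩ := n.eq_nat_or_neg
  · refine ⟨k, .inl (freelyHomotopic_iff.2 ⟨u, v, ha, h.flatten_replicate k, ?_⟩)⟩
    rwa [WalkFrom.cls_flatten_replicate, ← zpow_natCast]
  · refine ⟨k, .inr (freelyHomotopic_iff.2 ⟨u, v, ha, h.reverse.flatten_replicate k, ?_⟩)⟩
    rwa [WalkFrom.cls_flatten_replicate h.reverse, WalkFrom.cls_reverse,
      ← Groupoid.vertexGroup.inv_eq_inv, inv_pow, ← zpow_natCast, ← zpow_neg]

end Complex

/-! ### Cocycles -/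

namespace Complex

variable {g : ℕ} {X : Complex g} {A : Type*} [AddCommGroup A] {φ : X.D → A}

/-- A cellular 1-cochain of `X`, as a function on darts that changes sign under reversal. -/
def IsCochain (φ : X.D → A) : Prop := ∀ d, φ (X.dRev d) = -φ d

theorem IsCochain.sum_map_revW (hφ : X.IsCochain φ) (l : List X.D) :
    ((X.revW l).map φ).sum = -(l.map φ).sum := by
  induction l with
  | nil => simp
  | cons d l ih => simp [ih, hφ d, add_comm]

/-- A cellular 1-cocycle of `X`: a cochain that vanishes on the boundary of every face. -/
structure IsCocycle (φ : X.D → A) : Prop where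
  isCochain : X.IsCochain φ
  sum_bdry : ∀ f, ((X.bdry f).map φ).sum = 0

namespace IsCocycle

theorem sum_eq_of_elemMove (hφ : X.IsCocycle φ) {l l' : List X.D}
    (h : X.elemMove Set.univ Set.univ l l') : (l.map φ).sum = (l'.map φ).sum := by
  rcases h with ⟨l₁, l₂, d, -, rfl, rfl⟩ | ⟨l₁, l₂, b, ⟨f, -, n, hb⟩, rfl, rfl⟩
  · simp [hφ.isCochain d]
  · have hrot : (((X.bdry f).rotate n).map φ).sum = 0 :=
      (((X.bdry f).rotate_perm n).map φ).sum_eq.trans (hφ.sum_bdry f)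
    have hb0 : (b.map φ).sum = 0 := by
      rcases hb with rfl | rfl
      · exact hrot
      · rw [hφ.isCochain.sum_map_revW, hrot, neg_zero]
    simp [hb0]

theorem sum_eq_of_homotopic (hφ : X.IsCocycle φ) {u v : X.V} {l l' : List X.D}
    (h : X.Homotopic Set.univ Set.univ u v l l') : (l.map φ).sum = (l'.map φ).sum := by
  induction h with
  | refl => rfl
  | symm _ _ _ ih => exact ih.symm
  | trans _ _ _ _ _ ih ih' => exact ih.trans ih'
  | rel _ _ h =>
    exact h.2.2.2.2.elim hφ.sum_eq_of_elemMove fun h' => (hφ.sum_eq_of_elemMove h').symm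

/-- The integral of a cocycle along a homotopy class of walks. -/
def integral (hφ : X.IsCocycle φ) {u v : X.V} : (u ⟶ v) → A :=
  Quotient.lift (fun l => (l.1.map φ).sum) fun _ _ h => hφ.sum_eq_of_homotopic h

theorem integral_cls (hφ : X.IsCocycle φ) {u v : X.V} {l : List X.D} (h : X.WalkFrom u v l) :
    hφ.integral h.cls = (l.map φ).sum := rfl

theorem integral_comp (hφ : X.IsCocycle φ) {u v w : X.V} (γ : u ⟶ v) (δ : v ⟶ w) :
    hφ.integral (γ ≫ δ) = hφ.integral γ + hφ.integral δ := by
  obtain ⟨l, h, rfl⟩ := exists_eq_cls γ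
  obtain ⟨l', h', rfl⟩ := exists_eq_cls δ
  rw [← WalkFrom.cls_append, integral_cls, integral_cls, integral_cls, List.map_append,
    List.sum_append]

theorem integral_eq_of_freelyConj (hφ : X.IsCocycle φ) {u v : X.V} {a : u ⟶ u} {b : v ⟶ v}
    (h : FreelyConj a b) : hφ.integral a = hφ.integral b := by
  obtain ⟨q, hq⟩ := h
  have := congrArg hφ.integral hq
  rwa [integral_comp, integral_comp, add_comm, add_left_cancel_iff] at this

/-- Integration of a cocycle over the loops at `v`, as a homomorphism on the fundamental group. -/
def periodHom (hφ : X.IsCocycle φ) (v : X.V) : (v ⟶ v) →* Multiplicative A where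
  toFun γ := .ofAdd (hφ.integral γ)
  map_one' := rfl
  map_mul' γ δ := congrArg _ (hφ.integral_comp γ δ)

end IsCocycle

end Complex

section Group

variable {G ι : Type*} [Group G] {x : ι → G}

theorem map_eq_zpow_of_isConj {H : Type*} [CommGroup H] (φ : G →* H) {a b : G} {n : ℤ}
    (h : IsConj a (b ^ n)) : φ a = φ b ^ n := by
  rw [← map_zpow, ← isConj_iff_eq]
  exact φ.map_isConj h

variable
  (hx : ∀ γ : G, γ = 1 ∨ ∃ (i : ι) (n : ℤ), IsConj γ (x i ^ n))
  (hφ : ∀ i j, i ≠ j → ∃ φ : G →* Multiplicative ℤ, φ (x i) = .ofAdd 1 ∧ φ (x j) = .ofAdd (-1) ∧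
    ∀ k, k ≠ i → k ≠ j → φ (x k) = 1)

include hx hφ

theorem eq_or_eq_of_separating {i j : ι} (hij : i ≠ j) (k : ι) : k = i ∨ k = j := by
  by_contra! hk
  obtain ⟨φ, φi, φj, φ_ne⟩ := hφ i j hij
  obtain ⟨χ, χi, -, χ_ne⟩ := hφ i k hk.1.symm
  obtain ⟨ψ, ψj, -, ψ_ne⟩ := hφ j k hk.2.symm
  -- `x i * x j ^ 2` has a nonzero image under each of `φ`, `χ`, `ψ`, but every `x l` is killed
  -- by one of them.
  have hφ0 : φ (x i * x j ^ 2) ≠ 1 := by rw [map_mul, map_pow, φi, φj]; decide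
  have hχ0 : χ (x i * x j ^ 2) ≠ 1 := by
    rw [map_mul, map_pow, χi, χ_ne j hij.symm hk.2.symm]; decide
  have hψ0 : ψ (x i * x j ^ 2) ≠ 1 := by
    rw [map_mul, map_pow, ψj, ψ_ne i hij hk.1.symm]; decide
  rcases hx (x i * x j ^ 2) with h | ⟨l, n, h⟩
  · exact hφ0 (by rw [h, map_one])
  · by_cases hli : l = i
    · exact hψ0 (by
        rw [map_eq_zpow_of_isConj ψ h, hli, ψ_ne i hij hk.1.symm, one_zpow])
    · by_cases hlj : l = j
      · exact hχ0 (by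
          rw [map_eq_zpow_of_isConj χ h, hlj, χ_ne j hij.symm hk.2.symm, one_zpow])
      · exact hφ0 (by rw [map_eq_zpow_of_isConj φ h, φ_ne l hli hlj, one_zpow])

theorem mul_eq_one_of_separating {i j : ι} (hij : i ≠ j) : x i * x j = 1 := by
  obtain ⟨φ, φi, φj, -⟩ := hφ i j hij
  rcases hx (x i * x j) with h | ⟨l, n, h⟩
  · exact h
  have hn : φ (x l) ^ n = 1 := by
    rw [← map_eq_zpow_of_isConj φ h, map_mul, φi, φj]; rfl
  have hn0 : n = 0 := by
    apply_fun Multiplicative.toAdd at hn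
    rcases eq_or_eq_of_separating hx hφ hij l with rfl | rfl
    · simpa [φi] using hn
    · simpa [φj] using hn
  rwa [hn0, zpow_zero, isConj_one_left] at h

theorem exists_forall_isConj_zpow : ∃ c : G, ∀ γ : G, ∃ n : ℤ, IsConj γ (c ^ n) := by
  rcases isEmpty_or_nonempty ι with hι | ⟨⟨i⟩⟩
  · refine ⟨1, fun γ => ⟨0, ?_⟩⟩
    rcases hx γ with rfl | ⟨i, -⟩
    · rw [zpow_zero]
    · exact hι.elim i
  · refine ⟨x i, fun γ => ?_⟩
    rcases hx γ with rfl | ⟨j, n, h⟩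
    · exact ⟨0, by rw [zpow_zero]⟩
    · by_cases hij : i = j
      · exact ⟨n, hij ▸ h⟩
      · refine ⟨-n, ?_⟩
        rwa [zpow_neg, ← inv_zpow,
          inv_eq_of_mul_eq_one_right (mul_eq_one_of_separating hx hφ hij)]

end Group

/-! ### Proper surfaces and their dual graphs -/

section List

variable {α : Type*} {l : List α} {x y z : α}

theorem exists_getElem?_of_pair_infix (h : [x, y] <:+: l ++ l) :
    ∃ i < l.length, l[i]? = some x ∧ l[(i + 1) % l.length]? = some y := by
  obtain ⟨s, t, hst⟩ := h
  have hlen : s.length + 2 + t.length = l.length + l.length := by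
    simpa [add_assoc, add_comm, add_left_comm] using congrArg List.length hst
  have hmod {k : ℕ} (hk : k < l.length + l.length) : (l ++ l)[k]? = l[k % l.length]? := by
    rcases lt_or_ge k l.length with hk' | hk'
    · rw [List.getElem?_append_left hk', Nat.mod_eq_of_lt hk']
    · rw [List.getElem?_append_right hk', Nat.mod_eq_sub_mod hk', Nat.mod_eq_of_lt (by omega)]
  refine ⟨s.length % l.length, Nat.mod_lt _ (by omega), ?_, ?_⟩
  · rw [← hmod (by omega), ← hst]
    simp
  · rw [Nat.mod_add_mod, ← hmod (by omega), ← hst]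
    simp

theorem mem_and_mem_of_pair_infix (h : [x, y] <:+: l ++ l) : x ∈ l ∧ y ∈ l := by
  have hsub := h.subset
  simpa using hsub

theorem pair_infix_right_unique (hl : l.Nodup) (h : [x, y] <:+: l ++ l) (h' : [x, z] <:+: l ++ l) :
    y = z := by
  obtain ⟨i, hi, hix, hiy⟩ := exists_getElem?_of_pair_infix h
  obtain ⟨j, hj, hjx, hjz⟩ := exists_getElem?_of_pair_infix h'
  obtain rfl := (List.getElem?_inj hi hl).1 (hix.trans hjx.symm)
  exact Option.some_injective _ (hiy.symm.trans hjz)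

theorem pair_infix_left_unique (hl : l.Nodup) (h : [x, z] <:+: l ++ l) (h' : [y, z] <:+: l ++ l) :
    x = y := by
  obtain ⟨i, hi, hix, hiz⟩ := exists_getElem?_of_pair_infix h
  obtain ⟨j, hj, hjy, hjz⟩ := exists_getElem?_of_pair_infix h'
  have hij : (i + 1) % l.length = (j + 1) % l.length :=
    (List.getElem?_inj (Nat.mod_lt _ (by omega)) hl).1 (hiz.trans hjz.symm)
  obtain rfl : i = j := Nat.ModEq.eq_of_lt_of_lt (Nat.ModEq.add_right_cancel' 1 hij) hi hj
  exact Option.some_injective _ (hix.symm.trans hjy)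

theorem exists_pair_infix_of_mem_left (h : x ∈ l) : ∃ y, [x, y] <:+: l ++ l := by
  obtain ⟨s, t, rfl⟩ := List.append_of_mem h
  obtain ⟨y, r, hr⟩ : ∃ y r, t ++ (s ++ x :: t) = y :: r := List.exists_cons_of_ne_nil (by simp)
  exact ⟨y, s, r, by simp [hr]⟩

theorem exists_pair_infix_of_mem_right (h : x ∈ l) : ∃ y, [y, x] <:+: l ++ l := by
  obtain ⟨s, t, rfl⟩ := List.append_of_mem h
  obtain ⟨r, y, hr⟩ : ∃ r y, s ++ x :: t ++ s = r ++ [y] :=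
    (List.eq_nil_or_concat' _).resolve_left (by simp)
  exact ⟨y, r, t, by simpa using congrArg (· ++ x :: t) hr.symm⟩

variable {R : α → α → Prop}

theorem getLast?_eq_or_exists_rel (h : l.IsChain R) (hx : x ∈ l) :
    l.getLast? = some x ∨ ∃ y ∈ l, R x y := by
  obtain ⟨s, t, rfl⟩ := List.append_of_mem hx
  cases t with
  | nil => simp
  | cons y t =>
    exact .inr ⟨y, by simp, (List.isChain_append_cons_cons.1 h).2.1⟩

theorem head?_eq_or_exists_rel (h : l.IsChain R) (hl : l.Nodup) (hx : x ∈ l) :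
    l.head? = some x ∨ ∃ w, l.getLast? ≠ some w ∧ R w x := by
  obtain ⟨s, t, rfl⟩ := List.append_of_mem hx
  rcases List.eq_nil_or_concat' s with rfl | ⟨s, w, rfl⟩
  · simp
  · refine .inr ⟨w, fun hw => ?_, ?_⟩
    · have hwt : w ∈ x :: t := by
        rw [List.getLast?_append_of_ne_nil _ (List.cons_ne_nil x t)] at hw
        exact List.mem_of_getLast? hw
      exact List.disjoint_of_nodup_append hl (by simp) hwt
    · simp only [List.append_assoc, List.singleton_append] at h
      exact (List.isChain_append_cons_cons.1 h).2.1

theorem iff_of_isChain_iff {P : α → Prop} (h : l.IsChain fun x y => (P x ↔ P y)) (hx : x ∈ l)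
    (hy : y ∈ l) : P x ↔ P y := by
  let R : α → α → Prop := fun x y => P x ↔ P y
  have : Trans R R R := ⟨Iff.trans⟩
  have : Std.Symm R := ⟨fun _ _ => Iff.symm⟩
  have hpair : l.Pairwise R := List.isChain_iff_pairwise.1 h
  exact List.Pairwise.forall_of_forall (R := R) (fun _ _ => Iff.rfl) hpair hx hy

end List

namespace Complex

variable {g : ℕ} {X : Complex g}

variable (X) in
/-- The dart `d` is traversed by the boundary walk of some face. -/
def OnFace (d : X.D) : Prop := ∃ f, d ∈ X.bdry f

variable (X) in
/-- The dart `d` is a boundary dart, directed so that its only face runs along it. -/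
def IsBoundaryDart (d : X.D) : Prop := X.OnFace d ∧ ¬X.OnFace (X.dRev d)

variable (X) in
/-- `X` is a surface with boundary, up to labels: each dart lies on at most one face boundary and
each edge on one or two, and the face corners around each vertex form a single sequence. The
corners at `v` are recorded by the list of darts through which the face boundaries arrive at
`v`: neighbouring entries `d, e` of the list are the sides of one corner. -/
structure IsProperSurface : Prop where
  nodup_bdry : ∀ f, (X.bdry f).Nodup
  face_unique : ∀ {d f f'}, d ∈ X.bdry f → d ∈ X.bdry f' → f = f'
  bdry_closed : ∀ f, ∃ v, X.WalkFrom v v (X.bdry f)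
  covered : ∀ d, X.OnFace d ∨ X.OnFace (X.dRev d)
  fan : ∀ v, ∃ c : List X.D, c.Nodup ∧ (∀ d, d ∈ c ↔ X.OnFace d ∧ X.dHead d = v) ∧
    c.IsChain fun d e => X.faceStep Set.univ d (X.dRev e)

theorem faceStep.onFace_left {d d' : X.D} (h : X.faceStep Set.univ d d') : X.OnFace d := by
  obtain ⟨f, -, h⟩ := h
  exact ⟨f, (mem_and_mem_of_pair_infix h).1⟩

theorem faceStep.onFace_right {d d' : X.D} (h : X.faceStep Set.univ d d') : X.OnFace d' := by
  obtain ⟨f, -, h⟩ := h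
  exact ⟨f, (mem_and_mem_of_pair_infix h).2⟩

theorem OnFace.exists_faceStep_left {d : X.D} (h : X.OnFace d) :
    ∃ d', X.faceStep Set.univ d d' := by
  obtain ⟨f, hf⟩ := h
  exact (exists_pair_infix_of_mem_left hf).imp fun _ h => ⟨f, trivial, h⟩

theorem OnFace.exists_faceStep_right {d : X.D} (h : X.OnFace d) :
    ∃ d', X.faceStep Set.univ d' d := by
  obtain ⟨f, hf⟩ := h
  exact (exists_pair_infix_of_mem_right hf).imp fun _ h => ⟨f, trivial, h⟩

theorem faceStep.dHead_eq_dTail {d d' : X.D} (h : X.faceStep Set.univ d d')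
    (hclosed : ∀ f, ∃ v, X.WalkFrom v v (X.bdry f)) : X.dHead d = X.dTail d' := by
  obtain ⟨f, -, s, t, hst⟩ := h
  obtain ⟨v, hv⟩ := hclosed f
  have hwalk := hv.append hv
  rw [← hst, List.append_assoc] at hwalk
  exact hwalk.dHead_eq_dTail

namespace IsProperSurface

variable (hX : X.IsProperSurface)

include hX

theorem faceStep_right_unique {d e e' : X.D} (h : X.faceStep Set.univ d e)
    (h' : X.faceStep Set.univ d e') : e = e' := by
  obtain ⟨f, -, h⟩ := h
  obtain ⟨f', -, h'⟩ := h'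
  obtain rfl :=
    hX.face_unique (mem_and_mem_of_pair_infix h).1 (mem_and_mem_of_pair_infix h').1
  exact pair_infix_right_unique (hX.nodup_bdry f) h h'

theorem faceStep_left_unique {d d' e : X.D} (h : X.faceStep Set.univ d e)
    (h' : X.faceStep Set.univ d' e) : d = d' := by
  obtain ⟨f, -, h⟩ := h
  obtain ⟨f', -, h'⟩ := h'
  obtain rfl :=
    hX.face_unique (mem_and_mem_of_pair_infix h).2 (mem_and_mem_of_pair_infix h').2
  exact pair_infix_left_unique (hX.nodup_bdry f) h h'

theorem boundaryDart_eq_of_dHead_eq {d d' : X.D} (hd : X.IsBoundaryDart d)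
    (hd' : X.IsBoundaryDart d') (h : X.dHead d = X.dHead d') : d = d' := by
  obtain ⟨c, hc, hmem, hchain⟩ := hX.fan (X.dHead d)
  have hfirst {e : X.D} (he : X.IsBoundaryDart e) (hev : X.dHead e = X.dHead d) :
      c.head? = some e :=
    (head?_eq_or_exists_rel hchain hc ((hmem e).2 ⟨he.1, hev⟩)).resolve_right
      fun ⟨_, _, hstep⟩ => he.2 hstep.onFace_right
  exact Option.some_injective _ ((hfirst hd rfl).symm.trans (hfirst hd' h.symm))

theorem boundaryDart_eq_of_dTail_eq {d d' : X.D} (hd : X.IsBoundaryDart d)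
    (hd' : X.IsBoundaryDart d') (h : X.dTail d = X.dTail d') : d = d' := by
  obtain ⟨c, -, hmem, hchain⟩ := hX.fan (X.dTail d)
  have hlast {e : X.D} (he : X.IsBoundaryDart e) (hev : X.dTail e = X.dTail d) :
      ∃ x, c.getLast? = some x ∧ X.faceStep Set.univ x e := by
    obtain ⟨x, hx⟩ := he.1.exists_faceStep_right
    have hxc : x ∈ c := (hmem x).2 ⟨hx.onFace_left, (hx.dHead_eq_dTail hX.bdry_closed).trans hev⟩
    refine ⟨x, (getLast?_eq_or_exists_rel hchain hxc).resolve_right fun ⟨y, hy, hxy⟩ => he.2 ?_, hx⟩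
    rw [hX.faceStep_right_unique hx hxy, dRev_dRev]
    exact ((hmem y).1 hy).1
  obtain ⟨x, hx, hxd⟩ := hlast hd rfl
  obtain ⟨y, hy, hyd⟩ := hlast hd' h.symm
  obtain rfl := Option.some_injective _ (hx.symm.trans hy)
  exact hX.faceStep_right_unique hxd hyd

theorem exists_next_boundaryDart {d : X.D} (hd : X.IsBoundaryDart d) :
    ∃ d', X.IsBoundaryDart d' ∧ X.dTail d' = X.dHead d := by
  obtain ⟨c, hc, hmem, hchain⟩ := hX.fan (X.dHead d)
  have hdc : d ∈ c := (hmem d).2 ⟨hd.1, rfl⟩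
  have hne : c ≠ [] := List.ne_nil_of_mem hdc
  obtain ⟨hlast, hlastv⟩ := (hmem _).1 (c.getLast_mem hne)
  obtain ⟨d', hd'⟩ := hlast.exists_faceStep_left
  have htail : X.dTail d' = X.dHead d := (hd'.dHead_eq_dTail hX.bdry_closed).symm.trans hlastv
  refine ⟨d', ⟨hd'.onFace_right, fun hrev => ?_⟩, htail⟩
  have hmem' : X.dRev d' ∈ c := (hmem _).2 ⟨hrev, by rw [dHead_dRev, htail]⟩
  rcases head?_eq_or_exists_rel hchain hc hmem' with hfirst | ⟨w, hw, hstep⟩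
  · rcases head?_eq_or_exists_rel hchain hc hdc with hfirst' | ⟨_, _, hstep⟩
    · have hdd' : d = X.dRev d' := Option.some_injective _ (hfirst'.symm.trans hfirst)
      exact hd.2 (by rw [hdd', dRev_dRev]; exact hd'.onFace_right)
    · exact hd.2 hstep.onFace_right
  · rw [dRev_dRev] at hstep
    exact hw (by rw [hX.faceStep_left_unique hstep hd', List.getLast?_eq_getLast_of_ne_nil hne])

end IsProperSurface
end Complex

namespace Complex

variable {g : ℕ} {X : Complex g}

variable (X) in
/-- Adjacency in the dual graph: the faces `f` and `f'` share an edge, which their boundary walks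
traverse in opposite directions. -/
def FaceAdj (f f' : X.F) : Prop := ∃ d ∈ X.bdry f, X.dRev d ∈ X.bdry f'

namespace IsProperSurface

open Relation

variable (hX : X.IsProperSurface)

include hX

theorem reflTransGen_faceAdj_of_dHead_eq {d d' : X.D} {f f' : X.F} (hd : d ∈ X.bdry f)
    (hd' : d' ∈ X.bdry f') (h : X.dHead d = X.dHead d') : ReflTransGen X.FaceAdj f f' := by
  obtain ⟨c, -, hmem, hchain⟩ := hX.fan (X.dHead d)
  have hiff : c.IsChain fun x y =>
      ((∃ k, x ∈ X.bdry k ∧ ReflTransGen X.FaceAdj f k) ↔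
        ∃ k, y ∈ X.bdry k ∧ ReflTransGen X.FaceAdj f k) := by
    refine hchain.imp_of_mem_imp fun x y _ hy hxy => ?_
    obtain ⟨a, -, hstep⟩ := hxy
    obtain ⟨hxa, hya⟩ := mem_and_mem_of_pair_infix hstep
    obtain ⟨b, hyb⟩ := ((hmem y).1 hy).1
    constructor
    · rintro ⟨k, hxk, hk⟩
      obtain rfl := hX.face_unique hxa hxk
      exact ⟨b, hyb, hk.tail ⟨_, hya, by rwa [dRev_dRev]⟩⟩
    · rintro ⟨k, hyk, hk⟩
      exact ⟨a, hxa, hk.tail ⟨y, hyk, hya⟩⟩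
  obtain ⟨k, hk, hfk⟩ := (iff_of_isChain_iff hiff ((hmem d).2 ⟨⟨f, hd⟩, rfl⟩)
    ((hmem d').2 ⟨⟨f', hd'⟩, h.symm⟩)).1 ⟨f, hd, .refl⟩
  rwa [hX.face_unique hd' hk]

theorem exists_face_at_both_ends (d : X.D) : ∃ (f : X.F) (x y : X.D), x ∈ X.bdry f ∧ y ∈ X.bdry f ∧
    X.dHead x = X.dTail d ∧ X.dHead y = X.dHead d := by
  have key {d : X.D} (h : X.OnFace d) : ∃ (f : X.F) (x : X.D), x ∈ X.bdry f ∧ d ∈ X.bdry f ∧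
      X.dHead x = X.dTail d := by
    obtain ⟨x, f, -, hx⟩ := h.exists_faceStep_right
    have hmem := mem_and_mem_of_pair_infix hx
    exact ⟨f, x, hmem.1, hmem.2, faceStep.dHead_eq_dTail ⟨f, trivial, hx⟩ hX.bdry_closed⟩
  rcases hX.covered d with h | h
  · obtain ⟨f, x, hx, hd, hxd⟩ := key h
    exact ⟨f, x, d, hx, hd, hxd, rfl⟩
  · obtain ⟨f, x, hx, hd, hxd⟩ := key h
    exact ⟨f, X.dRev d, x, hd, hx, dHead_dRev d, hxd.trans (dTail_dRev d)⟩

theorem reflTransGen_faceAdj_of_walkFrom {u v : X.V} {l : List X.D} (hl : X.WalkFrom u v l)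
    {d d' : X.D} {f f' : X.F} (hd : d ∈ X.bdry f) (hd' : d' ∈ X.bdry f') (hdu : X.dHead d = u)
    (hdv : X.dHead d' = v) : ReflTransGen X.FaceAdj f f' := by
  induction hl generalizing d f with
  | nil v => exact hX.reflTransGen_faceAdj_of_dHead_eq hd hd' (hdu.trans hdv.symm)
  | cons a _ ih =>
    obtain ⟨k, x, y, hx, hy, hxa, hya⟩ := hX.exists_face_at_both_ends a
    exact (hX.reflTransGen_faceAdj_of_dHead_eq hd hx (hdu.trans hxa.symm)).trans (ih hy hya hdv)

end IsProperSurface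

section dartCochain

open Classical in
/-- The cochain dual to the dart `i`: the signed number of traversals of `i`. -/
def dartCochain (i d : X.D) : ℤ := (if d = i then 1 else 0) - if d = X.dRev i then 1 else 0

open Classical in
theorem isCochain_dartCochain (i : X.D) : X.IsCochain (dartCochain i) := by
  intro d
  have h : X.dRev d = i ↔ d = X.dRev i := ⟨fun h => by simp [← h], fun h => by simp [h]⟩
  have h' : X.dRev d = X.dRev i ↔ d = i :=
    ⟨fun h => by simpa using congrArg X.dRev h, fun h => by rw [h]⟩
  rw [dartCochain, dartCochain, neg_sub, if_congr h rfl rfl, if_congr h' rfl rfl]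

open Classical in
theorem sum_map_dartCochain (i : X.D) (l : List X.D) :
    (l.map (dartCochain i)).sum = (l.count i : ℤ) - l.count (X.dRev i) := by
  induction l with
  | nil => rfl
  | cons d l ih =>
    simp only [List.map_cons, List.sum_cons, ih, dartCochain, List.count_cons, beq_iff_eq]
    push_cast
    ring

end dartCochain

namespace IsProperSurface

open Relation

variable (hX : X.IsProperSurface)

include hX

open Classical in
theorem count_bdry {d : X.D} {f : X.F} (hd : d ∈ X.bdry f) (k : X.F) :
    (X.bdry k).count d = if k = f then 1 else 0 := by
  rw [(hX.nodup_bdry k).count]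
  exact if_congr ⟨fun h => hX.face_unique h hd, fun h => h ▸ hd⟩ rfl rfl

open Classical in
theorem exists_cochain_of_reflTransGen_faceAdj {f f' : X.F} (h : ReflTransGen X.FaceAdj f f') :
    ∃ ψ : X.D → ℤ, X.IsCochain ψ ∧ (∀ d, X.IsBoundaryDart d → ψ d = 0) ∧
      ∀ k, ((X.bdry k).map ψ).sum = (if k = f then 1 else 0) - if k = f' then 1 else 0 := by
  induction h with
  | refl => exact ⟨fun _ => 0, fun _ => by simp, fun _ _ => rfl, fun _ => by simp⟩
  | tail _ h ih =>
    obtain ⟨ψ, hψ, hψ0, hsum⟩ := ih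
    obtain ⟨d, hd, hd'⟩ := h
    refine ⟨ψ + dartCochain d, fun x => ?_, fun x hx => ?_, fun k => ?_⟩
    · rw [Pi.add_apply, Pi.add_apply, hψ, isCochain_dartCochain, neg_add]
    · have hxd : x ≠ d := fun h => hx.2 (h ▸ ⟨_, hd'⟩)
      have hxd' : x ≠ X.dRev d := fun h => hx.2 (by rw [h, dRev_dRev]; exact ⟨_, hd⟩)
      simp [hψ0 x hx, dartCochain, hxd, hxd']
    · rw [show ψ + dartCochain d = fun x => ψ x + dartCochain d x from rfl, List.sum_map_add,
        hsum, sum_map_dartCochain, hX.count_bdry hd, hX.count_bdry hd']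
      push_cast
      ring

open Classical in
/-- A dual path between the faces along `i` and `j`, closed up through `i` and `j`, is the support
of this cocycle. -/
theorem exists_isCocycle_sum_eq_count_sub_count (hconn : X.Connected) {i j : X.D}
    (hi : X.IsBoundaryDart i) (hj : X.IsBoundaryDart j) :
    ∃ φ : X.D → ℤ, X.IsCocycle φ ∧ ∀ l : List X.D, (∀ d ∈ l, X.IsBoundaryDart d) →
      (l.map φ).sum = (l.count i : ℤ) - l.count j := by
  obtain ⟨⟨fi, hfi⟩, hi'⟩ := hi
  obtain ⟨⟨fj, hfj⟩, hj'⟩ := hj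
  obtain ⟨q, hq⟩ := hconn.2 (X.dHead i) (X.dHead j)
  obtain ⟨ψ, hψ, hψ0, hsum⟩ := hX.exists_cochain_of_reflTransGen_faceAdj
    (hX.reflTransGen_faceAdj_of_walkFrom hq hfi hfj rfl rfl)
  have sum_eq (l : List X.D) : (l.map fun d => dartCochain i d - dartCochain j d - ψ d).sum =
      (l.map (dartCochain i)).sum - (l.map (dartCochain j)).sum - (l.map ψ).sum := by
    induction l with
    | nil => rfl
    | cons d l ih =>
      simp only [List.map_cons, List.sum_cons, ih]
      ring
  have count_dRev {d : X.D} {l : List X.D} (hd : ¬X.OnFace (X.dRev d))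
      (hl : ∀ x ∈ l, X.OnFace x) : l.count (X.dRev d) = 0 :=
    List.count_eq_zero.2 fun h => hd (hl _ h)
  refine ⟨fun d => dartCochain i d - dartCochain j d - ψ d, ⟨fun x => ?_, fun k => ?_⟩,
    fun l hl => ?_⟩
  · simp only [isCochain_dartCochain _ x, hψ x]
    ring
  · rw [sum_eq, sum_map_dartCochain, sum_map_dartCochain, hX.count_bdry hfi, hX.count_bdry hfj,
      count_dRev hi' fun x hx => ⟨k, hx⟩, count_dRev hj' fun x hx => ⟨k, hx⟩, hsum]
    push_cast
    ring
  · have hψl : (l.map ψ).sum = 0 := List.sum_eq_zero fun y hy => by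
      obtain ⟨d, hd, rfl⟩ := List.mem_map.1 hy
      exact hψ0 d (hl d hd)
    rw [sum_eq, sum_map_dartCochain, sum_map_dartCochain, hψl,
      count_dRev hi' fun x hx => (hl x hx).1, count_dRev hj' fun x hx => (hl x hx).1]
    push_cast
    ring

end IsProperSurface
end Complex

/-! ### Boundary circles -/

namespace Complex

variable {g : ℕ} {X : Complex g}

variable (X) in
/-- The boundary darts of `X`, as a type. -/
abbrev BoundaryDart : Type := {d : X.D // X.IsBoundaryDart d}

namespace IsProperSurface

open Function

variable (hX : X.IsProperSurface)

/-- The boundary dart that follows a given one along its boundary component. -/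
def next (d : X.BoundaryDart) : X.BoundaryDart :=
  ⟨_, (hX.exists_next_boundaryDart d.2).choose_spec.1⟩

/-- The boundary walk that starts with `d` and has `n` darts. -/
def arc (d : X.BoundaryDart) (n : ℕ) : List X.D := (List.iterate hX.next d n).map Subtype.val

theorem dTail_next (d : X.BoundaryDart) : X.dTail (hX.next d).1 = X.dHead d.1 :=
  (hX.exists_next_boundaryDart d.2).choose_spec.2

theorem arc_succ (d : X.BoundaryDart) (n : ℕ) : hX.arc d (n + 1) = d.1 :: hX.arc (hX.next d) n :=
  rfl

theorem arc_add (d : X.BoundaryDart) (m n : ℕ) :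
    hX.arc d (m + n) = hX.arc d m ++ hX.arc (hX.next^[m] d) n := by
  rw [arc, List.iterate_add, List.map_append, arc, arc]

theorem arc_mul {d : X.BoundaryDart} {n : ℕ} (hd : IsPeriodicPt hX.next n d) (k : ℕ) :
    hX.arc d (n * k) = (List.replicate k (hX.arc d n)).flatten := by
  induction k with
  | zero => rfl
  | succ k ih =>
    rw [Nat.mul_succ, add_comm, arc_add, hd.eq, ih, List.replicate_succ, List.flatten_cons]

theorem walkFrom_arc (d : X.BoundaryDart) (n : ℕ) :
    X.WalkFrom (X.dTail d.1) (X.dTail (hX.next^[n] d).1) (hX.arc d n) := by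
  induction n generalizing d with
  | zero => exact .nil _
  | succ n ih => exact .cons d.1 (hX.dTail_next d ▸ ih (hX.next d))

theorem eq_arc_of_walkFrom {d : X.BoundaryDart} {v : X.V} {l : List X.D}
    (h : X.WalkFrom (X.dTail d.1) v l) (hl : ∀ x ∈ l, X.IsBoundaryDart x) :
    l = hX.arc d l.length := by
  induction l generalizing d with
  | nil => rfl
  | cons a l ih =>
    obtain ⟨ha, h⟩ := walkFrom_cons_iff.1 h
    obtain rfl : a = d.1 := hX.boundaryDart_eq_of_dTail_eq (hl a (by simp)) d.2 ha
    rw [← hX.dTail_next] at h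
    rw [List.length_cons, arc_succ, ← ih h fun x hx => hl x (List.mem_cons_of_mem _ hx)]

theorem walkFrom_arc_minimalPeriod (d : X.BoundaryDart) :
    X.WalkFrom (X.dTail d.1) (X.dTail d.1) (hX.arc d (minimalPeriod hX.next d)) := by
  simpa only [iterate_minimalPeriod] using hX.walkFrom_arc d (minimalPeriod hX.next d)

/-- The class of the boundary component through `d`, traversed once from the tail of `d`. If that
component is not compact, the walk is empty and the class trivial. -/
def boundaryLoop (d : X.BoundaryDart) : X.dTail d.1 ⟶ X.dTail d.1 :=
  (hX.walkFrom_arc_minimalPeriod d).cls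

theorem freelyConj_boundaryLoop_iterate {d : X.BoundaryDart} (hd : d ∈ periodicPts hX.next)
    (n : ℕ) : FreelyConj (hX.boundaryLoop d) (hX.boundaryLoop (hX.next^[n] d)) := by
  refine ⟨(hX.walkFrom_arc d n).cls, ?_⟩
  rw [boundaryLoop, boundaryLoop, ← WalkFrom.cls_append, ← WalkFrom.cls_append,
    WalkFrom.cls_eq_iff]
  have h : hX.arc d (minimalPeriod hX.next d) ++ hX.arc d n = hX.arc d n ++
      hX.arc (hX.next^[n] d) (minimalPeriod hX.next (hX.next^[n] d)) := by
    rw [minimalPeriod_apply_iterate hd, ← arc_add, add_comm n, arc_add, iterate_minimalPeriod]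
  rw [h]
  exact .refl _

theorem exists_freelyConj_boundaryLoop_pow {v : X.V} {l : List X.D} (h : X.WalkFrom v v l)
    (hne : l ≠ []) (hl : ∀ d ∈ l, X.IsBoundaryDart d) :
    ∃ d ∈ periodicPts hX.next, ∃ n : ℕ, FreelyConj h.cls (hX.boundaryLoop d ^ n) := by
  obtain ⟨a, t, rfl⟩ := List.exists_cons_of_ne_nil hne
  obtain ⟨rfl, -⟩ := walkFrom_cons_iff.1 h
  let d : X.BoundaryDart := ⟨a, hl a (by simp)⟩
  have harc : a :: t = hX.arc d (a :: t).length := hX.eq_arc_of_walkFrom h hl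
  have hperiod : IsPeriodicPt hX.next (a :: t).length d := by
    refine Subtype.ext (hX.boundaryDart_eq_of_dTail_eq (hX.next^[_] d).2 d.2 ?_)
    have hwalk := hX.walkFrom_arc d (a :: t).length
    rw [← harc] at hwalk
    exact hwalk.end_unique h
  obtain ⟨n, hn⟩ := hperiod.minimalPeriod_dvd
  refine ⟨d, mk_mem_periodicPts (by simp) hperiod, n, ?_⟩
  have hcls : h.cls = hX.boundaryLoop d ^ n := by
    rw [boundaryLoop, ← WalkFrom.cls_flatten_replicate, WalkFrom.cls_eq_iff,
      ← hX.arc_mul (isPeriodicPt_minimalPeriod _ _), ← hn, ← harc]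
    exact .refl _
  rw [hcls]
  exact .refl _

/-- The compact boundary components of the surface, as the periodic orbits of `next`. -/
def BoundaryCircle : Type :=
  {o : Cycle X.BoundaryDart // ∃ d ∈ periodicPts hX.next, periodicOrbit hX.next d = o}

variable {hX}

/-- A boundary dart chosen on a boundary circle. -/
def BoundaryCircle.dart (o : hX.BoundaryCircle) : X.BoundaryDart := o.2.choose

theorem BoundaryCircle.dart_mem_periodicPts (o : hX.BoundaryCircle) :
    o.dart ∈ periodicPts hX.next :=
  o.2.choose_spec.1

theorem BoundaryCircle.periodicOrbit_dart (o : hX.BoundaryCircle) :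
    periodicOrbit hX.next o.dart = o.1 :=
  o.2.choose_spec.2

theorem exists_freelyConj_boundaryLoop_dart {d : X.BoundaryDart} (hd : d ∈ periodicPts hX.next) :
    ∃ o : hX.BoundaryCircle, FreelyConj (hX.boundaryLoop d) (hX.boundaryLoop o.dart) := by
  let o : hX.BoundaryCircle := ⟨_, d, hd, rfl⟩
  have ho : o.dart ∈ periodicOrbit hX.next d := by
    change o.dart ∈ o.1
    exact o.periodicOrbit_dart ▸ self_mem_periodicOrbit o.dart_mem_periodicPts
  obtain ⟨n, hn⟩ := (mem_periodicOrbit_iff hd).1 ho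
  exact ⟨o, hn ▸ hX.freelyConj_boundaryLoop_iterate hd n⟩

open Classical in
theorem count_arc_minimalPeriod (o o' : hX.BoundaryCircle) :
    (hX.arc o'.dart (minimalPeriod hX.next o'.dart)).count o.dart.1 = if o' = o then 1 else 0 := by
  have horbit : periodicOrbit hX.next o'.dart =
      (List.iterate hX.next o'.dart (minimalPeriod hX.next o'.dart) : Cycle _) := by
    rw [periodicOrbit_def, List.range_map_iterate]
  have hnodup : (List.iterate hX.next o'.dart (minimalPeriod hX.next o'.dart)).Nodup := by
    rw [← Cycle.nodup_coe_iff, ← horbit]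
    exact nodup_periodicOrbit
  rw [arc, List.count_map_of_injective _ _ Subtype.val_injective, hnodup.count]
  refine if_congr ?_ rfl rfl
  rw [← Cycle.mem_coe_iff, ← horbit]
  constructor
  · intro h
    obtain ⟨n, hn⟩ := (mem_periodicOrbit_iff o'.dart_mem_periodicPts).1 h
    refine Subtype.ext ?_
    rw [← o.periodicOrbit_dart, ← o'.periodicOrbit_dart, ← hn,
      periodicOrbit_apply_iterate_eq o'.dart_mem_periodicPts]
  · rintro rfl
    exact self_mem_periodicOrbit o'.dart_mem_periodicPts

end IsProperSurface
end Complex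

/-! ### Shortest cycles -/

namespace Complex

variable {g : ℕ} {X : Complex g}

theorem WalkFrom.exists_shorter {u v : X.V} {l : List X.D} (h : X.WalkFrom u v l)
    (hl : ¬l.IsChain fun d d' => d' ≠ X.dRev d) :
    ∃ (l' : List X.D) (h' : X.WalkFrom u v l'), h'.cls = h.cls ∧ l'.length < l.length := by
  simp only [List.isChain_iff_forall_rel_of_append_cons_cons, not_forall, not_not] at hl
  obtain ⟨d, d', l₁, l₂, rfl, rfl⟩ := hl
  obtain ⟨w, h₁, hcons⟩ := walkFrom_append_iff.1 h
  obtain ⟨rfl, htail⟩ := walkFrom_cons_iff.1 hcons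
  have h₂ : X.WalkFrom (X.dTail d) v l₂ := by
    simpa only [dHead_dRev] using (walkFrom_cons_iff.1 htail).2
  refine ⟨l₁ ++ l₂, h₁.append h₂, (WalkFrom.cls_eq_iff _ _).2 ?_, by simp⟩
  exact .rel _ _ ⟨h₁.append h₂, h, inSet_univ _, inSet_univ _,
    .inl (.inl ⟨l₁, l₂, d, trivial, rfl, rfl⟩)⟩

theorem exists_shortest_walk {v : X.V} (γ : v ⟶ v) :
    ∃ (u : X.V) (l : List X.D) (h : X.WalkFrom u u l), FreelyConj γ h.cls ∧
      ∀ (w : X.V) (l' : List X.D) (h' : X.WalkFrom w w l'), FreelyConj γ h'.cls →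
        l.length ≤ l'.length := by
  classical
  have hex : ∃ (n : ℕ) (u : X.V) (l : List X.D) (h : X.WalkFrom u u l),
      FreelyConj γ h.cls ∧ l.length = n := by
    obtain ⟨l, h, rfl⟩ := exists_eq_cls γ
    exact ⟨_, v, l, h, .refl _, rfl⟩
  obtain ⟨u, l, h, hγ, hlen⟩ := Nat.find_spec hex
  exact ⟨u, l, h, hγ, fun w l' h' hγ' => hlen ▸ Nat.find_min' hex ⟨w, l', h', hγ', rfl⟩⟩

theorem exists_isCycle_shortestRep {v : X.V} {γ : v ⟶ v} (hγ : γ ≠ 𝟙 v) :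
    ∃ (u : X.V) (l : List X.D) (h : X.WalkFrom u u l), FreelyConj γ h.cls ∧ X.IsCycle l ∧
      X.ShortestRep Set.univ Set.univ l ∧ l.IsChain fun d d' => d' ≠ X.dRev d := by
  obtain ⟨u, l, h, hconj, hmin⟩ := exists_shortest_walk γ
  have hne : l ≠ [] := by
    rintro rfl
    obtain ⟨q, hq⟩ := hconj
    exact hγ ((cancel_mono q).1 (hq.trans ((Category.comp_id q).trans (Category.id_comp q).symm)))
  refine ⟨u, l, h, hconj, ⟨hne, u, h⟩, fun c hc => ?_, by_contra fun hback => ?_⟩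
  · obtain ⟨u', w, h', hw, hconj'⟩ := freelyHomotopic_iff.1 hc
    obtain ⟨d, t, rfl⟩ := List.exists_cons_of_ne_nil hne
    obtain rfl := (walkFrom_cons_iff.1 h).1.symm.trans (walkFrom_cons_iff.1 h').1
    exact hmin w c hw (hconj.trans hconj')
  · obtain ⟨l', h', hcls, hlt⟩ := h.exists_shorter hback
    exact hlt.not_ge (hmin u l' h' (hcls ▸ hconj))

namespace IsProperSurface

open Function

variable (hX : X.IsProperSurface)

include hX

theorem forall_isBoundaryDart_of_isChain {u v : X.V} {l : List X.D} (h : X.WalkFrom u v l)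
    (hl : l.IsChain fun d d' => d' ≠ X.dRev d)
    (hint : ∀ d ∈ l, ¬(X.OnFace d ∧ X.OnFace (X.dRev d))) :
    (∀ d ∈ l, X.IsBoundaryDart d) ∨ ∀ d ∈ l, X.IsBoundaryDart (X.dRev d) := by
  have hpos {d : X.D} (hd : d ∈ l) (hf : X.OnFace d) : X.IsBoundaryDart d :=
    ⟨hf, fun hr => hint d hd ⟨hf, hr⟩⟩
  have hneg {d : X.D} (hf : ¬X.OnFace d) : X.IsBoundaryDart (X.dRev d) :=
    ⟨(hX.covered d).resolve_left hf, by rwa [dRev_dRev]⟩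
  have hiff : l.IsChain fun d d' => (X.OnFace d ↔ X.OnFace d') := by
    refine List.isChain_iff_forall_rel_of_append_cons_cons.2 fun d d' l₁ l₂ hdd' => ?_
    have hne := List.isChain_iff_forall_rel_of_append_cons_cons.1 hl hdd'
    have hd : d ∈ l := by simp [hdd']
    have hd' : d' ∈ l := by simp [hdd']
    rw [hdd'] at h
    refine ⟨fun hf => ?_, fun hf => ?_⟩
    · by_contra hf'
      refine hne ?_
      rw [hX.boundaryDart_eq_of_dHead_eq (hpos hd hf) (hneg hf')
        (h.dHead_eq_dTail.trans (dHead_dRev d').symm), dRev_dRev]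
    · by_contra hf'
      exact hne (hX.boundaryDart_eq_of_dTail_eq (hpos hd' hf) (hneg hf')
        (h.dHead_eq_dTail.symm.trans (dTail_dRev d).symm))
  by_cases hf : ∃ d ∈ l, X.OnFace d
  · obtain ⟨d, hd, hf⟩ := hf
    exact .inl fun d' hd' => hpos hd' ((iff_of_isChain_iff hiff hd hd').1 hf)
  · exact .inr fun d hd => hneg fun hfd => hf ⟨d, hd, hfd⟩

theorem exists_freelyConj_boundaryLoop_zpow {v : X.V} {l : List X.D} (h : X.WalkFrom v v l)
    (hne : l ≠ []) (hl : l.IsChain fun d d' => d' ≠ X.dRev d)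
    (hint : ∀ d ∈ l, ¬(X.OnFace d ∧ X.OnFace (X.dRev d))) :
    ∃ (o : hX.BoundaryCircle) (n : ℤ), FreelyConj h.cls (hX.boundaryLoop o.dart ^ n) := by
  have key {l : List X.D} (h : X.WalkFrom v v l) (hne : l ≠ [])
      (hl : ∀ d ∈ l, X.IsBoundaryDart d) :
      ∃ (o : hX.BoundaryCircle) (n : ℤ), FreelyConj h.cls (hX.boundaryLoop o.dart ^ n) := by
    obtain ⟨d, hd, n, hn⟩ := hX.exists_freelyConj_boundaryLoop_pow h hne hl
    obtain ⟨o, ho⟩ := exists_freelyConj_boundaryLoop_dart hd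
    rw [← zpow_natCast] at hn
    exact ⟨o, n, hn.trans (ho.zpow n)⟩
  rcases hX.forall_isBoundaryDart_of_isChain h hl hint with hb | hb
  · exact key h hne hb
  · have hrev : ∀ d ∈ X.revW l, X.IsBoundaryDart d := fun d hd => by
      obtain ⟨d', hd', rfl⟩ := List.mem_map.1 (List.mem_reverse.1 hd)
      exact hb d' hd'
    obtain ⟨o, n, hn⟩ := key h.reverse (by simpa [revW] using hne) hrev
    refine ⟨o, n * -1, ?_⟩
    have hinv := hn.zpow (-1)
    rwa [WalkFrom.cls_reverse, ← Groupoid.vertexGroup.inv_eq_inv, zpow_neg_one, inv_inv,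
      ← zpow_mul] at hinv

theorem exists_shortestRep_or_freelyConj_boundaryLoop {v : X.V} (γ : v ⟶ v) :
    (∃ c : List X.D, X.IsCycle c ∧ X.ShortestRep Set.univ Set.univ c ∧
      ∃ d ∈ c, X.OnFace d ∧ X.OnFace (X.dRev d)) ∨ γ = 𝟙 v ∨
    ∃ (o : hX.BoundaryCircle) (n : ℤ), FreelyConj γ (hX.boundaryLoop o.dart ^ n) := by
  by_cases hγ : γ = 𝟙 v
  · exact .inr (.inl hγ)
  obtain ⟨u, l, h, hconj, hcycle, hshort, hred⟩ := exists_isCycle_shortestRep hγ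
  by_cases hint : ∃ d ∈ l, X.OnFace d ∧ X.OnFace (X.dRev d)
  · exact .inl ⟨l, hcycle, hshort, hint⟩
  · obtain ⟨o, n, hn⟩ := hX.exists_freelyConj_boundaryLoop_zpow h hcycle.1 hred
      fun d hd hf => hint ⟨d, hd, hf⟩
    exact .inr (.inr ⟨o, n, hconj.trans hn⟩)

end IsProperSurface
end Complex

/-! ### Proper surfaces from labels -/

section Label

variable {g : ℕ}

theorem posLv_injective : Function.Injective (posLv : Letter g → ℕ) := by
  rintro ⟨⟨i, hi⟩, b⟩ ⟨⟨j, hj⟩, b'⟩ h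
  simp only [posLv, posIn, posOut] at h
  grind

theorem posLv_relator (p : Fin (4 * g)) : posLv (relLabel g p, relSign g p) =
    if (p : ℕ) % 4 = 1 then (p : ℕ) + 2 else if (p : ℕ) % 4 = 3 then (p : ℕ) - 2 else p := by
  simp only [posLv, posIn, posOut, relLabel, relSign]
  grind

theorem posArr_relator (p : Fin (4 * g)) : posArr (relLabel g p, relSign g p) =
    if (p : ℕ) % 4 = 0 then (p : ℕ) + 2 else if (p : ℕ) % 4 = 2 then (p : ℕ) - 2 else p := by
  simp only [posArr, posIn, posOut, relLabel, relSign]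
  grind

theorem nodup_relatorWord : (relatorWord g).Nodup := by
  refine (List.nodup_finRange _).map fun p q h => Fin.ext ?_
  have hpos := congrArg posLv h
  simp only [posLv_relator] at hpos
  grind

theorem posLv_relator_succ {p q : Fin (4 * g)} (h : (q : ℕ) = (p + 1) % (4 * g)) :
    posLv (relLabel g q, relSign g q) =
      (posArr (relLabel g p, relSign g p) + 1) % (4 * g) := by
  have hp := p.isLt
  rw [posLv_relator, posArr_relator]
  rcases lt_or_ge ((p : ℕ) + 1) (4 * g) with hlt | hge
  · rw [Nat.mod_eq_of_lt hlt] at h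
    split_ifs <;> (rw [Nat.mod_eq_of_lt] <;> omega)
  · have hlast : (p : ℕ) + 1 = 4 * g := by omega
    rw [hlast, Nat.mod_self] at h
    have hp4 : (p : ℕ) % 4 = 3 := by omega
    simp [h, hp4, hlast]

end Label

namespace Complex

variable {g : ℕ} {X : Complex g}

theorem posArr_dLet (d : X.D) : posArr (X.dLet d) = posLv (X.dLet (X.dRev d)) := by
  rcases d with ⟨e, _ | _⟩ <;> simp [dRev, dLet, posArr, posLv]

theorem P1.eq_of_dLet_eq (h1 : X.P1) {d d' : X.D} (ht : X.dTail d = X.dTail d')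
    (hl : X.dLet d = X.dLet d') : d = d' := by
  obtain ⟨e, b⟩ := d
  obtain ⟨e', b'⟩ := d'
  obtain ⟨hlab, rfl⟩ := Prod.mk.inj hl
  cases b
  · exact congrArg (·, false) (h1.2 e e' ht hlab)
  · exact congrArg (·, true) (h1.1 e e' ht hlab)

theorem P1.eq_of_wordOf_eq (h1 : X.P1) {u v w : X.V} {l l' : List X.D} (h : X.WalkFrom u v l)
    (h' : X.WalkFrom u w l') (hw : X.wordOf l = X.wordOf l') : l = l' := by
  induction l generalizing u l' with
  | nil => exact (List.map_eq_nil_iff.1 hw.symm).symm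
  | cons d l ih =>
    obtain ⟨d', l', rfl, hd, hl⟩ := List.map_eq_cons_iff.1 hw.symm
    obtain ⟨ht, h⟩ := walkFrom_cons_iff.1 h
    obtain ⟨ht', h'⟩ := walkFrom_cons_iff.1 h'
    obtain rfl := h1.eq_of_dLet_eq (ht.trans ht'.symm) hd.symm
    rw [ih h h' hl.symm]

theorem P3.nodup_bdry (h3 : X.P3) (f : X.F) : (X.bdry f).Nodup := by
  refine .of_map X.dLet ?_
  rw [← wordOf, (h3.1 f).2]
  exact nodup_relatorWord

theorem P3.exists_eq_append_of_mem_bdry (h3 : X.P3) {d : X.D} {f : X.F} (hd : d ∈ X.bdry f) :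
    ∃ s t, X.bdry f = s ++ d :: t ∧ X.WalkFrom (X.dTail d) (X.dTail d) (d :: t ++ s) ∧
      X.wordOf s ++ X.dLet d :: X.wordOf t = relatorWord g := by
  obtain ⟨s, t, hst⟩ := List.append_of_mem hd
  obtain ⟨⟨v, hv⟩, hw⟩ := h3.1 f
  rw [hst] at hv hw
  obtain ⟨w, hs, ht⟩ := walkFrom_append_iff.1 hv
  obtain rfl := (walkFrom_cons_iff.1 ht).1
  exact ⟨s, t, hst, ht.append hs, by simpa [wordOf] using hw⟩

theorem P3.eq_of_mem_bdry (h3 : X.P3) (h1 : X.P1) {d : X.D} {f f' : X.F} (hd : d ∈ X.bdry f)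
    (hd' : d ∈ X.bdry f') : f = f' := by
  obtain ⟨s, t, hf, hwalk, hword⟩ := h3.exists_eq_append_of_mem_bdry hd
  obtain ⟨s', t', hf', hwalk', hword'⟩ := h3.exists_eq_append_of_mem_bdry hd'
  have hletters := nodup_relatorWord (g := g)
  rw [← hword, List.nodup_middle, List.nodup_cons, List.mem_append, not_or] at hletters
  obtain ⟨hs, -, ht⟩ := (List.append_cons_inj_of_notMem hletters.1.1 hletters.1.2).1
    (hword.trans hword'.symm)
  have hrot : d :: t ++ s = d :: t' ++ s' := by
    refine h1.eq_of_wordOf_eq hwalk hwalk' ?_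
    simp only [wordOf] at hs ht
    simp [wordOf, hs, ht]
  have hlen : t.length = t'.length := by simpa [wordOf] using congrArg List.length ht
  obtain ⟨ht, rfl⟩ := List.append_inj hrot (by simp [hlen])
  exact h3.2 (by rw [hf, hf', ht])

theorem P3.posLv_of_faceStep (h3 : X.P3) {d d' : X.D} (h : X.faceStep Set.univ d d') :
    posLv (X.dLet d') = (posArr (X.dLet d) + 1) % (4 * g) := by
  obtain ⟨f, -, h⟩ := h
  obtain ⟨i, -, hd, hd'⟩ := exists_getElem?_of_pair_infix h
  have hlen : (X.bdry f).length = 4 * g := by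
    simpa [wordOf, relatorWord] using congrArg List.length (h3.1 f).2
  have hletter {j : ℕ} {e : X.D} (hj : (X.bdry f)[j]? = some e) :
      ∃ p : Fin (4 * g), (p : ℕ) = j ∧ X.dLet e = (relLabel g p, relSign g p) := by
    have hj' := congrArg (·[j]?) (h3.1 f).2
    simp only [wordOf, List.getElem?_map, hj, Option.map_some, relatorWord] at hj'
    obtain ⟨p, hp, hpe⟩ := Option.map_eq_some_iff.1 hj'.symm
    obtain ⟨_, rfl⟩ := List.getElem?_eq_some_iff.1 hp
    exact ⟨_, by simp, hpe.symm⟩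
  obtain ⟨p, hp, hpd⟩ := hletter hd
  obtain ⟨q, hq, hqd⟩ := hletter hd'
  rw [hpd, hqd]
  exact posLv_relator_succ (by rw [hq, hp, hlen])

theorem P1.eq_of_posArr_eq (h1 : X.P1) {d d' : X.D} (hv : X.dHead d = X.dHead d')
    (hpos : posArr (X.dLet d) = posArr (X.dLet d')) : d = d' := by
  rw [posArr_dLet, posArr_dLet] at hpos
  have hrev : X.dRev d = X.dRev d' := h1.eq_of_dLet_eq (by simpa using hv) (posLv_injective hpos)
  simpa using congrArg X.dRev hrev

theorem IsProperSurface.of_P1_P3 (h1 : X.P1) (h3 : X.P3)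
    (hcov : ∀ d : X.D, X.OnFace d ∨ X.OnFace (X.dRev d))
    (hfan : ∀ v, ∃ a m : ℕ, m ≤ 4 * g ∧ ∀ p,
      (∃ d, X.OnFace d ∧ X.dHead d = v ∧ posArr (X.dLet d) = p) ↔
        ∃ i < m, p = (a + i) % (4 * g)) : X.IsProperSurface where
  nodup_bdry := h3.nodup_bdry
  face_unique := h3.eq_of_mem_bdry h1
  bdry_closed f := (h3.1 f).1
  covered := hcov
  fan v := by
    obtain ⟨a, m, hm, hpos⟩ := hfan v
    choose d hface hhead hd using fun i : Fin m => (hpos _).2 ⟨i, i.2, rfl⟩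
    refine ⟨List.ofFn d, List.nodup_ofFn.2 fun i j hij => ?_, fun e => ?_,
      List.isChain_ofFn.2 fun i hi => ?_⟩
    · have hmod : a + i ≡ a + j [MOD 4 * g] := by
        rw [Nat.ModEq, ← hd i, ← hd j, hij]
      exact Fin.ext (hmod.add_left_cancel'.eq_of_lt_of_lt (i.2.trans_le hm) (j.2.trans_le hm))
    · rw [List.mem_ofFn]
      refine ⟨?_, fun ⟨he, hev⟩ => ?_⟩
      · rintro ⟨i, rfl⟩
        exact ⟨hface i, hhead i⟩
      · obtain ⟨i, hi, hei⟩ := (hpos _).1 ⟨e, he, hev, rfl⟩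
        exact ⟨⟨i, hi⟩, h1.eq_of_posArr_eq ((hhead _).trans hev.symm) ((hd _).trans hei.symm)⟩
    · set j : Fin m := ⟨i, i.lt_succ_self.trans hi⟩
      set k : Fin m := ⟨i + 1, hi⟩
      obtain ⟨e, he⟩ := (hface j).exists_faceStep_left
      have hrev : X.dRev e = d k := by
        refine h1.eq_of_posArr_eq ?_ ?_
        · rw [dHead_dRev, ← he.dHead_eq_dTail fun f => (h3.1 f).1, hhead, hhead]
        · rw [posArr_dLet, dRev_dRev, h3.posLv_of_faceStep he, hd, hd, Nat.mod_add_mod, add_assoc]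
      rwa [← hrev, dRev_dRev]

end Complex

namespace Hom

variable {g : ℕ} {X Z : Complex g} (φ : Hom X Z)

@[simp] theorem dTail_mD (d : X.D) : Z.dTail (φ.mD d) = φ.mV (X.dTail d) := by
  rcases d with ⟨e, _ | _⟩ <;> simp [mD, Complex.dTail, φ.hsrc, φ.hdst]

@[simp] theorem dHead_mD (d : X.D) : Z.dHead (φ.mD d) = φ.mV (X.dHead d) := by
  rcases d with ⟨e, _ | _⟩ <;> simp [mD, Complex.dHead, φ.hsrc, φ.hdst]

@[simp] theorem wordOf_map_mD (l : List X.D) : Z.wordOf (l.map φ.mD) = X.wordOf l := by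
  simp [Complex.wordOf, Complex.dLet, mD, φ.hlab]

variable {φ}

theorem walkFrom_of_map_mD (hφ : Function.Injective φ.mV) {u : X.V} {w : Z.V} {l : List X.D}
    (h : Z.WalkFrom (φ.mV u) w (l.map φ.mD)) : ∃ v, φ.mV v = w ∧ X.WalkFrom u v l := by
  induction l generalizing u with
  | nil => exact ⟨u, Complex.walkFrom_nil_iff.1 h, .nil u⟩
  | cons d l ih =>
    obtain ⟨ht, h⟩ := Complex.walkFrom_cons_iff.1 h
    rw [dTail_mD] at ht
    rw [dHead_mD] at h
    obtain ⟨v, hv, hwalk⟩ := ih h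
    exact ⟨v, hv, Complex.walkFrom_cons_iff.2 ⟨hφ ht, hwalk⟩⟩

theorem P1_of_inj (hφ : φ.Inj) (h1 : Z.P1) : X.P1 :=
  ⟨fun e e' hs hl => hφ.2.1 <| h1.1 _ _ (by rw [φ.hsrc, φ.hsrc, hs]) (by rw [φ.hlab, φ.hlab, hl]),
    fun e e' ht hl => hφ.2.1 <| h1.2 _ _ (by rw [φ.hdst, φ.hdst, ht]) (by rw [φ.hlab, φ.hlab, hl])⟩

theorem P3_of_inj [Nonempty X.V] (hφ : φ.Inj) (h3 : Z.P3) : X.P3 := by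
  have hbdry (f : X.F) : Z.bdry (φ.mF f) = (X.bdry f).map φ.mD := φ.hbdry f
  refine ⟨fun f => ⟨?_, ?_⟩, fun f f' h => hφ.2.2 <| h3.2 ?_⟩
  · obtain ⟨w, hw⟩ := (h3.1 (φ.mF f)).1
    rw [hbdry] at hw
    rcases hl : X.bdry f with _ | ⟨d, l⟩
    · exact ‹Nonempty X.V›.elim fun v => ⟨v, .nil v⟩
    · rw [hl] at hw
      obtain rfl : φ.mV (X.dTail d) = w := by simpa using (Complex.walkFrom_cons_iff.1 hw).1
      obtain ⟨v, hv, hwalk⟩ := walkFrom_of_map_mD hφ.1 hw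
      obtain rfl := hφ.1 hv
      exact ⟨_, hwalk⟩
  · rw [← wordOf_map_mD φ, ← hbdry, (h3.1 _).2]
  · rw [hbdry, hbdry, h]

end Hom

namespace Complex

variable {g : ℕ} {X : Complex g}

theorem onFace_iff_exists_pair_infix {d : X.D} :
    X.OnFace d ↔ ∃ f d', [d, d'] <:+: X.bdry f ++ X.bdry f :=
  exists_congr fun _ =>
    ⟨exists_pair_infix_of_mem_left, fun ⟨_, h⟩ => (mem_and_mem_of_pair_infix h).1⟩

theorem IsTiledSurface.isProperSurface [Nonempty X.V] (hX : X.IsTiledSurface)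
    (hcov : ∀ e : X.E, ∃ p : X.F × Bool, (e, p.2) ∈ X.bdry p.1)
    (hfan : ∀ v, ∃ a m : ℕ, m ≤ 4 * g ∧
      {p : ℕ | ∃ (f : X.F) (d d' : X.D), [d, d'] <:+: X.bdry f ++ X.bdry f ∧
          X.dHead d = v ∧ posArr (X.dLet d) = p} =
        {p : ℕ | ∃ i < m, p = (a + i) % (4 * g)}) : X.IsProperSurface := by
  obtain ⟨Z, hZ, φ, hφ⟩ := hX
  refine .of_P1_P3 (Hom.P1_of_inj hφ hZ.1) (Hom.P3_of_inj hφ hZ.2.1) ?_ fun v => ?_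
  · rintro ⟨e, b⟩
    obtain ⟨⟨f, b'⟩, h⟩ := hcov e
    rcases eq_or_eq_dRev_of_fst_eq (X := X) (d := (e, b')) (d' := (e, b)) rfl with h' | h'
    · exact .inl ⟨f, h' ▸ h⟩
    · exact .inr ⟨f, h' ▸ h⟩
  · obtain ⟨a, m, hm, hset⟩ := hfan v
    refine ⟨a, m, hm, fun p => Iff.trans ?_ (Set.ext_iff.1 hset p)⟩
    simp only [onFace_iff_exists_pair_infix, Set.mem_ofPred_eq]
    grind

end Complex

/-! ### Cycles off the boundary -/

namespace Complex

variable {g : ℕ} {X : Complex g}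

namespace IsProperSurface

open Function

variable (hX : X.IsProperSurface)

theorem exists_freelyConj_boundaryLoop (hconn : X.Connected) (v : X.V) :
    ∃ x : hX.BoundaryCircle → (v ⟶ v), ∀ o, FreelyConj (x o) (hX.boundaryLoop o.dart) := by
  choose q hq using fun o : hX.BoundaryCircle => hconn.2 v (X.dTail o.dart.1)
  exact ⟨fun o => (Groupoid.vertexGroupIsomOfMap (hq o).cls).symm (hX.boundaryLoop o.dart),
    fun o => FreelyConj.iff_exists_vertexGroupIsomOfMap.2
      ⟨(hq o).cls, MulEquiv.apply_symm_apply _ _⟩⟩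

theorem exists_separating_hom (hconn : X.Connected) {v : X.V}
    {x : hX.BoundaryCircle → (v ⟶ v)} (hx : ∀ o, FreelyConj (x o) (hX.boundaryLoop o.dart))
    {o o' : hX.BoundaryCircle} (hne : o ≠ o') :
    ∃ φ : (v ⟶ v) →* Multiplicative ℤ, φ (x o) = .ofAdd 1 ∧ φ (x o') = .ofAdd (-1) ∧
      ∀ k, k ≠ o → k ≠ o' → φ (x k) = 1 := by
  classical
  obtain ⟨φ, hφ, hsum⟩ :=
    hX.exists_isCocycle_sum_eq_count_sub_count hconn o.dart.2 o'.dart.2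
  have hperiod (k : hX.BoundaryCircle) : hφ.periodHom v (x k) =
      .ofAdd ((if k = o then 1 else 0) - if k = o' then 1 else 0) := by
    have hbd : ∀ d ∈ hX.arc k.dart (minimalPeriod hX.next k.dart), X.IsBoundaryDart d := by
      simp only [arc, List.mem_map]
      rintro _ ⟨d, -, rfl⟩
      exact d.2
    have hint : hφ.integral (x k) = (if k = o then 1 else 0) - if k = o' then 1 else 0 := by
      rw [hφ.integral_eq_of_freelyConj (hx k), boundaryLoop, hφ.integral_cls, hsum _ hbd,
        count_arc_minimalPeriod, count_arc_minimalPeriod]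
      push_cast
      rfl
    exact congrArg Multiplicative.ofAdd hint
  refine ⟨hφ.periodHom v, ?_, ?_, fun k hk hk' => ?_⟩
  · simp [hperiod, hne]
  · simp [hperiod, hne.symm]
  · simp [hperiod, hk, hk']

end IsProperSurface
end Complex

theorem statement_10_general {g : ℕ} {X : Complex g} (hX : X.IsProperSurface)
    (hconn : X.Connected) (hbig : ¬CyclicPi1 X) :
    ∃ c : List X.D, X.IsCycle c ∧ X.ShortestRep Set.univ Set.univ c ∧
      ∃ d ∈ c, ∃ p q : X.F × Bool, p ≠ q ∧
        (d.1, p.2) ∈ X.bdry p.1 ∧ (d.1, q.2) ∈ X.bdry q.1 := by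
  suffices ∃ c : List X.D, X.IsCycle c ∧ X.ShortestRep Set.univ Set.univ c ∧
      ∃ d ∈ c, X.OnFace d ∧ X.OnFace (X.dRev d) by
    obtain ⟨c, hc, hshort, d, hd, ⟨f, hf⟩, f', hf'⟩ := this
    exact ⟨c, hc, hshort, d, hd, (f, d.2), (f', !d.2), by simp, hf, hf'⟩
  by_contra hno
  obtain ⟨v⟩ := hconn.1
  obtain ⟨x, hx⟩ := hX.exists_freelyConj_boundaryLoop hconn v
  have hgen (γ : v ⟶ v) : γ = 1 ∨ ∃ (o : hX.BoundaryCircle) (n : ℤ), IsConj γ (x o ^ n) := by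
    rcases hX.exists_shortestRep_or_freelyConj_boundaryLoop γ with h | h | ⟨o, n, h⟩
    · exact (hno h).elim
    · exact .inl h
    · exact .inr ⟨o, n, FreelyConj.iff_isConj.1 (h.trans ((hx o).zpow n).symm)⟩
  obtain ⟨c, hc⟩ := exists_forall_isConj_zpow hgen fun _ _ => hX.exists_separating_hom hconn hx
  exact hbig (Complex.cyclicPi1_of_forall_isConj_zpow hconn c hc)

/-- Let `X` be a connected tiled surface which is a proper
surface (every edge is incident with one or two `4g`-gons, and the `4g`-gon
corners around each vertex form a single nonempty consecutive sequence of length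
`m`, `1 ≤ m ≤ 4g`).  If `X` has genus `≥ 1` or at least `3` boundary components
and punctures in total — for a connected surface this is *equivalent* to `π₁(X)`
being non-cyclic, which is how we render it — then `X^(1)` contains a cycle, not
contained in `∂X`, which is cyclically shortest in its free homotopy class. -/
theorem statement_10 (g : ℕ) (hg : 2 ≤ g) (X : Complex g) (hX : X.IsTiledSurface)
    (hconn : X.Connected)
    (hpe : ∀ e : X.E, {p : X.F × Bool | (e, p.2) ∈ X.bdry p.1}.Nonempty ∧
      ∃ p q : X.F × Bool, {p' : X.F × Bool | (e, p'.2) ∈ X.bdry p'.1} ⊆ {p, q})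
    (hpv : ∀ v : X.V, ∃ a m : ℕ, 1 ≤ m ∧ m ≤ 4 * g ∧
      {p : ℕ | ∃ (f : X.F) (d d' : X.D), [d, d'] <:+: (X.bdry f ++ X.bdry f) ∧
          X.dHead d = v ∧ posArr (X.dLet d) = p} =
        {p : ℕ | ∃ i < m, p = (a + i) % (4 * g)})
    (hbig : ¬ CyclicPi1 X) :
    ∃ c : List X.D, X.IsCycle c ∧ X.ShortestRep Set.univ Set.univ c ∧
      ∃ d ∈ c, ∃ p q : X.F × Bool, p ≠ q ∧
        (d.1, p.2) ∈ X.bdry p.1 ∧ (d.1, q.2) ∈ X.bdry q.1 := by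
  have := hconn.1
  exact statement_10_general (hX.isProperSurface (fun e => (hpe e).1) fun v =>
    (hpv v).imp fun _ ⟨m, _, h⟩ => ⟨m, h⟩) hconn hbig

end CS

end
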